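/- arXiv:2111.06444 — 7 statements merged into one kernel-verified Lean document; each statement's English description precedes it below -/
import Mathlib

section
/- Let H1, H2, Np > 0, N ≥ 0, and set a = H1 + H2 + N. Let φ, ψ : [0,∞) → [0,∞) be continuous with φ strictly increasing and ψ nondecreasing. Suppose (ρ, R1, R2) with ρ ∈ (0,1] and R1, R2 ≥ 0 satisfies R1 ≤ (1/2)·log₂(1 + (1−ρ)H1/((1−ρ)N + Np)), R2 ≤ (1/2)·log₂(1 + (1−ρ)H2/((1−ρ)N + Np)), R1 + R2 < (1/2)·log₂(1 + (1−ρ)(H1+H2)/((1−ρ)N + Np)), and φ(R1 + R2) < ψ(ρ·a) (i.e., both the sum-rate constraint and the decoding-cost constraint are strict). Then there exists (ρ', R1', R2') with ρ' ∈ [0,1], R1' > R1, R2' > R2, satisfying all four constraints (with non-strict inequalities). In particular, such a point (R1, R2) does not lie on the maximum departure region boundary. -/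
/-!
Lowering the power-splitting factor `ρ` strictly increases every rate bound, since more of the
received signal reaches the decoder while the processing noise `Np` stays fixed. A strict
decoding-cost constraint leaves room, by continuity of `ψ`, to lower `ρ` a little; all rate bounds
are then strict, so by continuity of `φ` both rates can be raised.
-/

open Set Filter Topology

theorem strictMonoOn_mul_div_mul_add {𝕜 : Type*} [Field 𝕜] [LinearOrder 𝕜]
    [IsStrictOrderedRing 𝕜] {b c d : 𝕜} (hb : 0 < b) (hc : 0 ≤ c) (hd : 0 < d) :
    StrictMonoOn (fun t ↦ t * b / (t * c + d)) (Ici 0) := by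
  intro s (hs : 0 ≤ s) t (ht : 0 ≤ t) hst
  have cross_mul_lt : s * b * (t * c + d) < t * b * (s * c + d) := by
    have gap_pos : 0 < b * d * (t - s) := mul_pos (mul_pos hb hd) (sub_pos.2 hst)
    linear_combination gap_pos
  exact (div_lt_div_iff₀ (by positivity) (by positivity)).2 cross_mul_lt

theorem tendsto_add_nhdsGT_prod {α : Type*} [TopologicalSpace α] [AddCommMonoid α]
    [PartialOrder α] [IsOrderedCancelAddMonoid α] [ContinuousAdd α] (x y : α) :
    Tendsto (fun p : α × α ↦ p.1 + p.2) (𝓝[>] x ×ˢ 𝓝[>] y) (𝓝[>] (x + y)) := by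
  refine tendsto_nhdsWithin_iff.2 ⟨?_, ?_⟩
  · exact (tendsto_fst.mono_right nhdsWithin_le_nhds).add
      (tendsto_snd.mono_right nhdsWithin_le_nhds)
  · filter_upwards [prod_mem_prod self_mem_nhdsWithin self_mem_nhdsWithin] with p hp
    exact add_lt_add hp.1 hp.2

theorem exists_mem_Ioo_mem_Ioo_comp_add_lt {α β : Type*} [TopologicalSpace α] [AddCommMonoid α]
    [LinearOrder α] [IsOrderedCancelAddMonoid α] [OrderTopology α] [ContinuousAdd α]
    [DenselyOrdered α] [TopologicalSpace β] [Preorder β] [OrderTopology β]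
    {f : α → β} {x y u v w : α} {c : β} (hf : ContinuousWithinAt f (Ioi (x + y)) (x + y))
    (hxu : x < u) (hyv : y < v) (hw : x + y < w) (hc : f (x + y) < c) :
    ∃ x' ∈ Ioo x u, ∃ y' ∈ Ioo y v, x' + y' < w ∧ f (x' + y') < c := by
  have : (𝓝[>] x).NeBot := nhdsGT_neBot_of_exists_gt ⟨u, hxu⟩
  have : (𝓝[>] y).NeBot := nhdsGT_neBot_of_exists_gt ⟨v, hyv⟩
  have coords : ∀ᶠ p in 𝓝[>] x ×ˢ 𝓝[>] y, p ∈ Ioo x u ×ˢ Ioo y v :=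
    prod_mem_prod (Ioo_mem_nhdsGT hxu) (Ioo_mem_nhdsGT hyv)
  have total : ∀ᶠ s in 𝓝[>] (x + y), s < w ∧ f s < c :=
    (eventually_nhdsWithin_of_eventually_nhds (gt_mem_nhds hw)).and
      (hf.eventually (gt_mem_nhds hc))
  obtain ⟨⟨x', y'⟩, ⟨hx', hy'⟩, hw', hc'⟩ :=
    (coords.and ((tendsto_add_nhdsGT_prod x y).eventually total)).exists
  exact ⟨x', hx', y', hy', hw', hc'⟩

theorem exists_mem_Ioo_lt_comp_mul_right {𝕜 β : Type*} [Field 𝕜] [LinearOrder 𝕜]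
    [IsStrictOrderedRing 𝕜] [TopologicalSpace 𝕜] [OrderTopology 𝕜] [TopologicalSpace β]
    [Preorder β] [OrderTopology β] {g : 𝕜 → β} {a l x : 𝕜} {c : β} (ha : 0 < a) (hlx : l < x)
    (hg : ContinuousWithinAt g (Iio (x * a)) (x * a)) (hc : c < g (x * a)) :
    ∃ y ∈ Ioo l x, c < g (y * a) := by
  have scaled : ContinuousWithinAt (fun y ↦ g (y * a)) (Iio x) x :=
    hg.comp (f := fun y ↦ y * a) (continuous_mul_const a).continuousWithinAt
      fun _ hy ↦ mul_lt_mul_of_pos_right hy ha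
  have near : ∀ᶠ y in 𝓝[<] x, y ∈ Ioo l x := Ioo_mem_nhdsLT hlx
  exact (near.and (scaled.eventually (lt_mem_nhds hc))).exists

/-- The Gaussian rate bound, in bits, for received signal power `H` when a fraction `ρ` of the
received power is diverted to energy harvesting: receiver noise `N` is scaled by `1 - ρ` together
with the signal, processing noise `Np` is not. -/
noncomputable def psRate (H N Np ρ : ℝ) : ℝ :=
  (1/2) * Real.logb 2 (1 + (1 - ρ) * H / ((1 - ρ) * N + Np))

theorem strictAntiOn_psRate {H N Np : ℝ} (hH : 0 < H) (hN : 0 ≤ N) (hNp : 0 < Np) :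
    StrictAntiOn (psRate H N Np) (Iic 1) := by
  intro r hr ρ hρ hrρ
  have ht : 0 ≤ 1 - ρ := sub_nonneg.2 hρ
  have hs : 0 ≤ 1 - r := sub_nonneg.2 hr
  have snr_lt : (1 - ρ) * H / ((1 - ρ) * N + Np) < (1 - r) * H / ((1 - r) * N + Np) :=
    strictMonoOn_mul_div_mul_add hH hN hNp ht hs (sub_lt_sub_left hrρ 1)
  have logb_lt := Real.logb_lt_logb one_lt_two (by positivity) (add_lt_add_right snr_lt 1)
  exact mul_lt_mul_of_pos_left logb_lt one_half_pos

theorem stmt_2_general {H1 H2 Np N a : ℝ} (hH1 : 0 < H1) (hH2 : 0 < H2) (hNp : 0 < Np)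
    (hN : 0 ≤ N) (ha : a = H1 + H2 + N) {φ ψ : ℝ → ℝ} {ρ R1 R2 : ℝ} (hρ : ρ ∈ Ioc (0 : ℝ) 1)
    (hφ : ContinuousWithinAt φ (Ioi (R1 + R2)) (R1 + R2))
    (hψ : ContinuousWithinAt ψ (Iio (ρ * a)) (ρ * a))
    (h1 : R1 ≤ psRate H1 N Np ρ) (h2 : R2 ≤ psRate H2 N Np ρ)
    (hsum : R1 + R2 ≤ psRate (H1 + H2) N Np ρ) (hcost : φ (R1 + R2) < ψ (ρ * a)) :
    ∃ ρ' R1' R2' : ℝ, ρ' ∈ Icc (0 : ℝ) 1 ∧ R1 < R1' ∧ R2 < R2' ∧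
      R1' ≤ psRate H1 N Np ρ' ∧ R2' ≤ psRate H2 N Np ρ' ∧
      R1' + R2' ≤ psRate (H1 + H2) N Np ρ' ∧ φ (R1' + R2') ≤ ψ (ρ' * a) := by
  have a_pos : 0 < a := by rw [ha]; positivity
  obtain ⟨r, ⟨hr0, hrρ⟩, cost_lt⟩ := exists_mem_Ioo_lt_comp_mul_right a_pos hρ.1 hψ hcost
  have hr1 : r ≤ 1 := hrρ.le.trans hρ.2
  have rate_lt {H : ℝ} (hH : 0 < H) : psRate H N Np ρ < psRate H N Np r :=
    strictAntiOn_psRate hH hN hNp hr1 hρ.2 hrρ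
  obtain ⟨R1', ⟨hlt1, h1'⟩, R2', ⟨hlt2, h2'⟩, hsum', hcost'⟩ :=
    exists_mem_Ioo_mem_Ioo_comp_add_lt hφ (h1.trans_lt (rate_lt hH1))
      (h2.trans_lt (rate_lt hH2)) (hsum.trans_lt (rate_lt (add_pos hH1 hH2))) cost_lt
  exact ⟨r, R1', R2', ⟨hr0.le, hr1⟩, hlt1, hlt2, h1'.le, h2'.le, hsum'.le, hcost'.le⟩

/-- Classical PS-SWIPT MAC, simultaneous decoding: if both the sum-rate
constraint and the decoding-cost constraint are satisfied with strict
inequality at `(ρ, R1, R2)` with `ρ ∈ (0,1]`, then both rates can be strictly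
increased while keeping feasibility, so such a point does not lie on the
maximum departure region boundary. -/
theorem stmt_2 (H1 H2 Np N : ℝ) (hH1 : 0 < H1) (hH2 : 0 < H2) (hNp : 0 < Np) (hN : 0 ≤ N)
    (a : ℝ) (ha : a = H1 + H2 + N)
    (φ ψ : ℝ → ℝ)
    (hφc : ContinuousOn φ (Set.Ici 0)) (hψc : ContinuousOn ψ (Set.Ici 0))
    (hφmap : ∀ x : ℝ, 0 ≤ x → 0 ≤ φ x) (hψmap : ∀ x : ℝ, 0 ≤ x → 0 ≤ ψ x)
    (hφ : StrictMonoOn φ (Set.Ici 0)) (hψ : MonotoneOn ψ (Set.Ici 0))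
    (ρ R1 R2 : ℝ) (hρ : ρ ∈ Set.Ioc (0 : ℝ) 1) (hR1 : 0 ≤ R1) (hR2 : 0 ≤ R2)
    (h1 : R1 ≤ (1/2) * Real.logb 2 (1 + (1 - ρ) * H1 / ((1 - ρ) * N + Np)))
    (h2 : R2 ≤ (1/2) * Real.logb 2 (1 + (1 - ρ) * H2 / ((1 - ρ) * N + Np)))
    (hsum : R1 + R2 < (1/2) * Real.logb 2 (1 + (1 - ρ) * (H1 + H2) / ((1 - ρ) * N + Np)))
    (hcost : φ (R1 + R2) < ψ (ρ * a)) :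
    ∃ ρ' R1' R2' : ℝ, ρ' ∈ Set.Icc (0 : ℝ) 1 ∧ R1 < R1' ∧ R2 < R2' ∧
      R1' ≤ (1/2) * Real.logb 2 (1 + (1 - ρ') * H1 / ((1 - ρ') * N + Np)) ∧
      R2' ≤ (1/2) * Real.logb 2 (1 + (1 - ρ') * H2 / ((1 - ρ') * N + Np)) ∧
      R1' + R2' ≤ (1/2) * Real.logb 2 (1 + (1 - ρ') * (H1 + H2) / ((1 - ρ') * N + Np)) ∧
      φ (R1' + R2') ≤ ψ (ρ' * a) :=
  stmt_2_general hH1 hH2 hNp hN ha hρ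
    ((hφc _ (add_nonneg hR1 hR2)).mono (Ioi_subset_Ici (add_nonneg hR1 hR2)))
    (hψc.continuousAt (Ici_mem_nhds (mul_pos hρ.1 (by rw [ha]; positivity)))).continuousWithinAt
    h1 h2 hsum.le hcost
end

section
/- Let a, N, Np be reals with a > N ≥ 0 and Np > 0. Let φ, ψ : [0,∞) → [0,∞) be continuous with φ strictly increasing, φ(0) = 0, ψ nondecreasing, ψ(0) = 0, and ψ(a) > 0. Then there exists a unique ρ̃ ∈ [0,1] satisfying φ( (1/2)·log₂(1 + (1−ρ̃)(a−N)/((1−ρ̃)N + Np)) ) = ψ(ρ̃·a); moreover 0 < ρ̃ < 1. -/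
/-!
The achievable rate strictly decreases with the power-splitting factor and vanishes when all power
goes to harvesting. Hence the decoding cost is continuous and strictly decreasing, while the
harvested power is continuous and nondecreasing; the former is larger at `ρ = 0`, the latter at
`ρ = 1`, so the two curves cross exactly once, strictly in between.
-/

open Set

theorem eq_of_strictAntiOn_of_monotoneOn {α δ : Type*} [LinearOrder α] [Preorder δ] {f g : α → δ}
    {s : Set α} (hf : StrictAntiOn f s) (hg : MonotoneOn g s) {x y : α}
    (hx : x ∈ s) (hy : y ∈ s) (hfgx : f x = g x) (hfgy : f y = g y) : x = y := by
  by_contra hne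
  wlog hxy : x < y generalizing x y
  · exact this hy hx hfgy hfgx (Ne.symm hne) ((not_lt.mp hxy).lt_of_ne' hne)
  have hlt : f y < f y :=
    calc f y < f x := hf hx hy hxy
      _ = g x := hfgx
      _ ≤ g y := hg hx hy hxy.le
      _ = f y := hfgy.symm
  exact hlt.false

theorem exists_mem_Ioo_eq_of_continuousOn {α δ : Type*}
    [ConditionallyCompleteLinearOrder α] [TopologicalSpace α] [OrderTopology α] [DenselyOrdered α]
    [LinearOrder δ] [TopologicalSpace δ] [OrderClosedTopology δ] {f g : α → δ} {l r : α}
    (hlr : l ≤ r) (hf : ContinuousOn f (Icc l r)) (hg : ContinuousOn g (Icc l r))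
    (hl : g l < f l) (hr : f r < g r) : ∃ x ∈ Ioo l r, f x = g x := by
  obtain ⟨x, hx, hfg⟩ := isPreconnected_Icc.intermediate_value₂
    (right_mem_Icc.mpr hlr) (left_mem_Icc.mpr hlr) hf hg hr.le hl.le
  have hxl : x ≠ l := by rintro rfl; exact hl.ne' hfg
  have hxr : x ≠ r := by rintro rfl; exact hr.ne hfg
  exact ⟨x, ⟨hx.1.lt_of_ne' hxl, hx.2.lt_of_ne hxr⟩, hfg⟩

section PowerSplitting

/-- The capacity, in bits per channel use, of the real additive white Gaussian noise channel with
signal-to-noise ratio `γ`. -/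
noncomputable def awgnCapacity (γ : ℝ) : ℝ :=
  (1 / 2) * Real.logb 2 (1 + γ)

theorem awgnCapacity_zero : awgnCapacity 0 = 0 := by
  simp [awgnCapacity]

theorem strictMonoOn_awgnCapacity : StrictMonoOn awgnCapacity (Ioi (-1)) := by
  intro γ hγ γ' _ hlt
  have hpos : 0 < 1 + γ := neg_lt_iff_pos_add'.mp hγ
  have hlog : Real.logb 2 (1 + γ) < Real.logb 2 (1 + γ') :=
    Real.logb_lt_logb one_lt_two hpos (by gcongr)
  exact mul_lt_mul_of_pos_left hlog one_half_pos

theorem continuousOn_awgnCapacity : ContinuousOn awgnCapacity (Ioi (-1)) := by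
  have hlog : ContinuousOn (fun γ : ℝ ↦ Real.log (1 + γ)) (Ioi (-1)) :=
    ContinuousOn.log (by fun_prop) fun γ hγ ↦ (neg_lt_iff_pos_add'.mp hγ).ne'
  exact continuousOn_const.mul (hlog.div_const _)

/-- The signal-to-noise ratio at the decoder of a power-splitting receiver that diverts the
fraction `ρ` of its input to energy harvesting. Here `S` is the received signal power and `N` the
receiver noise power, both attenuated by the splitter, and `Np` is the noise power of the
subsequent signal processing. -/
noncomputable def splitSNR (S N Np ρ : ℝ) : ℝ :=
  (1 - ρ) * S / ((1 - ρ) * N + Np)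

variable {S N Np : ℝ}

theorem splitSNR_one : splitSNR S N Np 1 = 0 := by
  simp [splitSNR]

theorem splitNoise_pos (hN : 0 ≤ N) (hNp : 0 < Np) {ρ : ℝ} (hρ : ρ ≤ 1) :
    0 < (1 - ρ) * N + Np :=
  add_pos_of_nonneg_of_pos (mul_nonneg (sub_nonneg.mpr hρ) hN) hNp

theorem splitSNR_nonneg (hS : 0 ≤ S) (hN : 0 ≤ N) (hNp : 0 < Np) {ρ : ℝ} (hρ : ρ ≤ 1) :
    0 ≤ splitSNR S N Np ρ :=
  div_nonneg (mul_nonneg (sub_nonneg.mpr hρ) hS) (splitNoise_pos hN hNp hρ).le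

theorem strictAntiOn_splitSNR (hS : 0 < S) (hN : 0 ≤ N) (hNp : 0 < Np) :
    StrictAntiOn (splitSNR S N Np) (Iic 1) := by
  intro ρ hρ σ hσ hlt
  have hcross : (1 - ρ) * S * ((1 - σ) * N + Np) - (1 - σ) * S * ((1 - ρ) * N + Np)
      = (σ - ρ) * S * Np := by ring
  have hpos : 0 < (σ - ρ) * S * Np := mul_pos (mul_pos (sub_pos.mpr hlt) hS) hNp
  rw [splitSNR, splitSNR, div_lt_div_iff₀ (splitNoise_pos hN hNp hσ) (splitNoise_pos hN hNp hρ)]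
  exact sub_pos.mp (hcross ▸ hpos)

theorem continuousOn_splitSNR (hN : 0 ≤ N) (hNp : 0 < Np) :
    ContinuousOn (splitSNR S N Np) (Iic 1) :=
  ContinuousOn.div (by fun_prop) (by fun_prop) fun _ hρ ↦ (splitNoise_pos hN hNp hρ).ne'

theorem mapsTo_splitSNR (hS : 0 ≤ S) (hN : 0 ≤ N) (hNp : 0 < Np) :
    MapsTo (splitSNR S N Np) (Iic 1) (Ioi (-1)) :=
  fun _ hρ ↦ neg_one_lt_zero.trans_le (splitSNR_nonneg hS hN hNp hρ)

theorem strictAntiOn_awgnCapacity_splitSNR (hS : 0 < S) (hN : 0 ≤ N) (hNp : 0 < Np) :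
    StrictAntiOn (fun ρ ↦ awgnCapacity (splitSNR S N Np ρ)) (Iic 1) :=
  strictMonoOn_awgnCapacity.comp_strictAntiOn (strictAntiOn_splitSNR hS hN hNp)
    (mapsTo_splitSNR hS.le hN hNp)

theorem continuousOn_awgnCapacity_splitSNR (hS : 0 ≤ S) (hN : 0 ≤ N) (hNp : 0 < Np) :
    ContinuousOn (fun ρ ↦ awgnCapacity (splitSNR S N Np ρ)) (Iic 1) :=
  continuousOn_awgnCapacity.comp (continuousOn_splitSNR hN hNp) (mapsTo_splitSNR hS hN hNp)

end PowerSplitting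

theorem exists_unique_decodingCost_eq_harvestedPower {R φ ψ : ℝ → ℝ} {a : ℝ} (ha : 0 ≤ a)
    (hRc : ContinuousOn R (Icc 0 1)) (hR : StrictAntiOn R (Icc 0 1)) (hR1 : R 1 = 0)
    (hφc : ContinuousOn φ (Ici 0)) (hφ : StrictMonoOn φ (Ici 0))
    (hψc : ContinuousOn ψ (Ici 0)) (hψ : MonotoneOn ψ (Ici 0))
    (h0 : ψ 0 ≤ φ 0) (hψa : φ 0 < ψ a) :
    ∃ ρ ∈ Ioo (0 : ℝ) 1, φ (R ρ) = ψ (ρ * a) ∧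
      ∀ σ ∈ Icc (0 : ℝ) 1, φ (R σ) = ψ (σ * a) → σ = ρ := by
  have h0_mem : (0 : ℝ) ∈ Icc (0 : ℝ) 1 := left_mem_Icc.mpr zero_le_one
  have h1_mem : (1 : ℝ) ∈ Icc (0 : ℝ) 1 := right_mem_Icc.mpr zero_le_one
  have hR_maps : MapsTo R (Icc 0 1) (Ici 0) := fun ρ hρ ↦
    hR1.symm.trans_le (hR.antitoneOn hρ h1_mem hρ.2)
  have ha_maps : MapsTo (· * a) (Icc 0 1) (Ici 0) := fun ρ hρ ↦ mul_nonneg hρ.1 ha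
  have hcost : StrictAntiOn (fun ρ ↦ φ (R ρ)) (Icc 0 1) := hφ.comp_strictAntiOn hR hR_maps
  have hharvest : MonotoneOn (fun ρ ↦ ψ (ρ * a)) (Icc 0 1) :=
    hψ.comp ((monotone_mul_right_of_nonneg ha).monotoneOn _) ha_maps
  have hleft : ψ (0 * a) < φ (R 0) :=
    calc ψ (0 * a) = ψ 0 := by rw [zero_mul]
      _ ≤ φ 0 := h0
      _ = φ (R 1) := by rw [hR1]
      _ < φ (R 0) := hcost h0_mem h1_mem zero_lt_one
  have hright : φ (R 1) < ψ (1 * a) := by rwa [hR1, one_mul]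
  obtain ⟨ρ, hρ, heq⟩ := exists_mem_Ioo_eq_of_continuousOn zero_le_one
    (hφc.comp hRc hR_maps) (hψc.comp (by fun_prop) ha_maps) hleft hright
  exact ⟨ρ, hρ, heq, fun σ hσ hσ_eq ↦
    eq_of_strictAntiOn_of_monotoneOn hcost hharvest hσ (Ioo_subset_Icc_self hρ) hσ_eq heq⟩

/-- Classical PS-SWIPT MAC, simultaneous decoding (Theorem 2,
existence/uniqueness): there exists a unique `ρ̃ ∈ [0,1]` with
`φ((1/2)log₂(1 + (1−ρ̃)(a−N)/((1−ρ̃)N+Np))) = ψ(ρ̃·a)`, and moreover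
`0 < ρ̃ < 1`. -/
theorem stmt_4 (a N Np : ℝ) (haN : N < a) (hN : 0 ≤ N) (hNp : 0 < Np)
    (φ ψ : ℝ → ℝ)
    (hφc : ContinuousOn φ (Set.Ici 0)) (hψc : ContinuousOn ψ (Set.Ici 0))
    (hφmap : ∀ x : ℝ, 0 ≤ x → 0 ≤ φ x) (hψmap : ∀ x : ℝ, 0 ≤ x → 0 ≤ ψ x)
    (hφ : StrictMonoOn φ (Set.Ici 0)) (hψ : MonotoneOn ψ (Set.Ici 0))
    (hφ0 : φ 0 = 0) (hψ0 : ψ 0 = 0) (hψa : 0 < ψ a) :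
    ∃ ρt : ℝ, ρt ∈ Set.Icc (0 : ℝ) 1 ∧
      φ ((1/2) * Real.logb 2 (1 + (1 - ρt) * (a - N) / ((1 - ρt) * N + Np))) = ψ (ρt * a) ∧
      0 < ρt ∧ ρt < 1 ∧
      ∀ ρ ∈ Set.Icc (0 : ℝ) 1,
        φ ((1/2) * Real.logb 2 (1 + (1 - ρ) * (a - N) / ((1 - ρ) * N + Np))) = ψ (ρ * a) →
        ρ = ρt := by
  have hS : 0 < a - N := sub_pos.mpr haN
  have hrate_zero : awgnCapacity (splitSNR (a - N) N Np 1) = 0 := by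
    rw [splitSNR_one, awgnCapacity_zero]
  obtain ⟨ρt, hρt, hbalance, hunique⟩ :=
    exists_unique_decodingCost_eq_harvestedPower (hN.trans haN.le)
      ((continuousOn_awgnCapacity_splitSNR hS.le hN hNp).mono Icc_subset_Iic_self)
      ((strictAntiOn_awgnCapacity_splitSNR hS hN hNp).mono Icc_subset_Iic_self)
      hrate_zero hφc hφ hψc hψ (hψ0.trans hφ0.symm).le (hφ0.trans_lt hψa)
  exact ⟨ρt, Ioo_subset_Icc_self hρt, hbalance, hρt.1, hρt.2, hunique⟩
end

section
/- Let H1, H2, Np > 0, N ≥ 0, and set Nu = H2 + N and a = H1 + H2 + N. Let φ, ψ : [0,∞) → [0,∞) be continuous and strictly increasing with φ(0) = 0 and ψ(0) = 0. Consider the feasible set F of triples (ρ, R1, R2) ∈ [0,1] × [0,∞) × [0,∞) satisfying R1 ≤ (1/2)·log₂(1 + (1−ρ)H1/((1−ρ)Nu + Np)), R2 ≤ (1/2)·log₂(1 + (1−ρ)H2/((1−ρ)N + Np)), and φ(R1) + φ(R2) ≤ ψ(ρ·a). If (ρ*, R1*, R2*) ∈ F maximizes R1 + R2 over F, then φ(R1*)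 + φ(R2*) = ψ(ρ*·a) (the harvested energy is fully consumed), and at least one of the two individual rate constraints holds with equality. -/
/-!
At a maximizer of the sum rate no splitting factor can leave slack both in the first user's rate
constraint and in the energy budget, since then the first rate could be increased. Unspent energy
would allow a slightly smaller splitting factor, which strictly raises the first user's rate bound.
If neither rate bound were attained, a slightly larger splitting factor would keep both bounds slack
and strictly raise the budget.
-/

open Set Filter Topology

/-- The signal-to-noise ratio after power splitting: the fraction `1 - ρ` of the received signal,
of power `H`, and of the antenna noise, of power `M`, is decoded, and processing adds noise of power
`K`. -/
noncomputable def powerSplittingSNR (H M K ρ : ℝ) : ℝ :=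
  (1 - ρ) * H / ((1 - ρ) * M + K)

/-- The Gaussian rate bound, in bits per channel use, of a power-splitting receiver; see
`powerSplittingSNR` for the parameters. -/
noncomputable def powerSplittingRate (H M K ρ : ℝ) : ℝ :=
  (1 / 2) * Real.logb 2 (1 + powerSplittingSNR H M K ρ)

section PowerSplittingRate

variable {H M K ρ : ℝ}

lemma powerSplitting_noise_pos (hM : 0 ≤ M) (hK : 0 < K) (hρ : ρ ≤ 1) :
    0 < (1 - ρ) * M + K :=
  add_pos_of_nonneg_of_pos (mul_nonneg (sub_nonneg.2 hρ) hM) hK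

lemma powerSplittingSNR_nonneg (hH : 0 ≤ H) (hM : 0 ≤ M) (hK : 0 < K) (hρ : ρ ≤ 1) :
    0 ≤ powerSplittingSNR H M K ρ :=
  div_nonneg (mul_nonneg (sub_nonneg.2 hρ) hH) (powerSplitting_noise_pos hM hK hρ).le

lemma strictAntiOn_powerSplittingSNR (hH : 0 < H) (hM : 0 ≤ M) (hK : 0 < K) :
    StrictAntiOn (powerSplittingSNR H M K) (Iic 1) := by
  intro x hx y hy hxy
  unfold powerSplittingSNR
  rw [div_lt_div_iff₀ (powerSplitting_noise_pos hM hK hy) (powerSplitting_noise_pos hM hK hx)]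
  have hgap : 0 < (y - x) * (H * K) := mul_pos (sub_pos.2 hxy) (mul_pos hH hK)
  linarith

lemma continuousOn_powerSplittingSNR (hM : 0 ≤ M) (hK : 0 < K) :
    ContinuousOn (powerSplittingSNR H M K) (Iic 1) :=
  ContinuousOn.div (by fun_prop) (by fun_prop) fun _ hρ => (powerSplitting_noise_pos hM hK hρ).ne'

lemma strictAntiOn_powerSplittingRate (hH : 0 < H) (hM : 0 ≤ M) (hK : 0 < K) :
    StrictAntiOn (powerSplittingRate H M K) (Iic 1) := by
  intro x hx y hy hxy
  have hpos : 0 < 1 + powerSplittingSNR H M K y :=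
    add_pos_of_pos_of_nonneg one_pos (powerSplittingSNR_nonneg hH.le hM hK hy)
  have hsnr := strictAntiOn_powerSplittingSNR hH hM hK hx hy hxy
  unfold powerSplittingRate
  gcongr
  exact one_lt_two

lemma continuousOn_powerSplittingRate (hH : 0 ≤ H) (hM : 0 ≤ M) (hK : 0 < K) :
    ContinuousOn (powerSplittingRate H M K) (Iic 1) :=
  continuousOn_const.mul <| ((continuousOn_powerSplittingSNR hM hK).const_add 1).logb
    fun _ hρ => (add_pos_of_pos_of_nonneg one_pos (powerSplittingSNR_nonneg hH hM hK hρ)).ne'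

@[simp]
lemma powerSplittingRate_one : powerSplittingRate H M K 1 = 0 := by
  simp [powerSplittingRate, powerSplittingSNR]

end PowerSplittingRate

/-- The feasible triples `(ρ, R₁, R₂)` of a two-user power-splitting receiver with rate bounds
`C₁` and `C₂`, decoding cost `κ` and harvested energy `E`; the bounds and the energy are functions
of the splitting factor `ρ`. -/
def feasibleSet (C₁ C₂ : ℝ → ℝ) (κ : ℝ → ℝ → ℝ) (E : ℝ → ℝ) : Set (ℝ × ℝ × ℝ) :=
  {x | x.1 ∈ Icc (0 : ℝ) 1 ∧ 0 ≤ x.2.1 ∧ 0 ≤ x.2.2 ∧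
    x.2.1 ≤ C₁ x.1 ∧ x.2.2 ≤ C₂ x.1 ∧ κ x.2.1 x.2.2 ≤ E x.1}

/-- The objective `R₁ + R₂` at the triple `(ρ, R₁, R₂)`. -/
def sumRate (x : ℝ × ℝ × ℝ) : ℝ := x.2.1 + x.2.2

section Maximizer

variable {C₁ C₂ E : ℝ → ℝ} {κ : ℝ → ℝ → ℝ} {ρ R₁ R₂ : ℝ}

lemma energy_le_cost_of_isMaxOn_sumRate (hκ : ContinuousOn (κ · R₂) (Ici 0))
    (hR₁ : 0 ≤ R₁) (hR₂ : 0 ≤ R₂)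
    (hmax : IsMaxOn sumRate (feasibleSet C₁ C₂ κ E) (ρ, R₁, R₂))
    {r : ℝ} (hr : r ∈ Icc (0 : ℝ) 1) (hC₁ : R₁ < C₁ r) (hC₂ : R₂ ≤ C₂ r) :
    E r ≤ κ R₁ R₂ := by
  by_contra! hslack
  have hcont : ContinuousWithinAt (κ · R₂) (Ioi R₁) R₁ :=
    (hκ R₁ hR₁).mono fun _ hx => hR₁.trans (le_of_lt hx)
  obtain ⟨R, hcost, hlt, hcap⟩ :=
    ((hcont.eventually_lt_const hslack).and (Ioo_mem_nhdsGT hC₁)).exists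
  have hfeas : (r, R, R₂) ∈ feasibleSet C₁ C₂ κ E :=
    ⟨hr, hR₁.trans hlt.le, hR₂, hcap.le, hC₂, hcost.le⟩
  have hle : R + R₂ ≤ R₁ + R₂ := hmax hfeas
  linarith

lemma cost_eq_energy_of_isMaxOn_sumRate
    (hC₁ : StrictAntiOn C₁ (Icc 0 1)) (hC₂ : AntitoneOn C₂ (Icc 0 1))
    (hκ : ContinuousOn (κ · R₂) (Ici 0)) (hκ_nonneg : 0 ≤ κ R₁ R₂)
    (hE : ContinuousOn E (Icc 0 1)) (hE_zero : E 0 ≤ 0)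
    (hfeas : (ρ, R₁, R₂) ∈ feasibleSet C₁ C₂ κ E)
    (hmax : IsMaxOn sumRate (feasibleSet C₁ C₂ κ E) (ρ, R₁, R₂)) :
    κ R₁ R₂ = E ρ := by
  obtain ⟨hρ, hR₁, hR₂, hcap₁, hcap₂, hcost⟩ := hfeas
  refine hcost.antisymm ?_
  by_contra! hslack
  have hρ_pos : 0 < ρ := by
    refine hρ.1.lt_of_ne ?_
    rintro rfl
    linarith
  have hcont : ContinuousWithinAt E (Ioo 0 ρ) ρ :=
    (hE ρ hρ).mono fun _ hx => ⟨hx.1.le, hx.2.le.trans hρ.2⟩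
  rw [ContinuousWithinAt, nhdsWithin_Ioo_eq_nhdsLT hρ_pos] at hcont
  obtain ⟨r, henergy, hr_pos, hrρ⟩ :=
    ((hcont.eventually_const_lt hslack).and (Ioo_mem_nhdsLT hρ_pos)).exists
  have hr : r ∈ Icc (0 : ℝ) 1 := ⟨hr_pos.le, hrρ.le.trans hρ.2⟩
  exact henergy.not_ge <| energy_le_cost_of_isMaxOn_sumRate hκ hR₁ hR₂ hmax hr
    (hcap₁.trans_lt (hC₁ hr hρ hrρ)) (hcap₂.trans (hC₂ hr hρ hrρ.le))

lemma eq_rate_or_eq_rate_of_isMaxOn_sumRate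
    (hC₁ : ContinuousOn C₁ (Icc 0 1)) (hC₂ : ContinuousOn C₂ (Icc 0 1)) (hC₁_one : C₁ 1 ≤ 0)
    (hκ : ContinuousOn (κ · R₂) (Ici 0)) (hE : StrictMonoOn E (Icc 0 1))
    (hfeas : (ρ, R₁, R₂) ∈ feasibleSet C₁ C₂ κ E)
    (hmax : IsMaxOn sumRate (feasibleSet C₁ C₂ κ E) (ρ, R₁, R₂)) :
    R₁ = C₁ ρ ∨ R₂ = C₂ ρ := by
  obtain ⟨hρ, hR₁, hR₂, hcap₁, hcap₂, hcost⟩ := hfeas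
  by_contra! hne
  have hslack₁ : R₁ < C₁ ρ := hcap₁.lt_of_ne hne.1
  have hslack₂ : R₂ < C₂ ρ := hcap₂.lt_of_ne hne.2
  have hρ_lt : ρ < 1 := by
    refine hρ.2.lt_of_ne ?_
    rintro rfl
    linarith
  have hsub : Ioo ρ 1 ⊆ Icc 0 1 := fun _ hx => ⟨hρ.1.trans hx.1.le, hx.2.le⟩
  have hcont₁ := (hC₁ ρ hρ).mono hsub
  have hcont₂ := (hC₂ ρ hρ).mono hsub
  rw [ContinuousWithinAt, nhdsWithin_Ioo_eq_nhdsGT hρ_lt] at hcont₁ hcont₂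
  obtain ⟨r, hr₁, hr₂, hr_mem⟩ := ((hcont₁.eventually_const_lt hslack₁).and <|
    (hcont₂.eventually_const_lt hslack₂).and (Ioo_mem_nhdsGT hρ_lt)).exists
  have henergy : κ R₁ R₂ < E r := hcost.trans_lt (hE hρ (hsub hr_mem) hr_mem.1)
  exact henergy.not_ge <|
    energy_le_cost_of_isMaxOn_sumRate hκ hR₁ hR₂ hmax (hsub hr_mem) hr₁ hr₂.le

theorem stmt_8_general
    (hC₁_anti : StrictAntiOn C₁ (Icc 0 1)) (hC₂_anti : AntitoneOn C₂ (Icc 0 1))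
    (hC₁ : ContinuousOn C₁ (Icc 0 1)) (hC₂ : ContinuousOn C₂ (Icc 0 1)) (hC₁_one : C₁ 1 ≤ 0)
    (hκ : ContinuousOn (κ · R₂) (Ici 0)) (hκ_nonneg : 0 ≤ κ R₁ R₂)
    (hE : ContinuousOn E (Icc 0 1)) (hE_mono : StrictMonoOn E (Icc 0 1)) (hE_zero : E 0 ≤ 0)
    (hfeas : (ρ, R₁, R₂) ∈ feasibleSet C₁ C₂ κ E)
    (hmax : IsMaxOn sumRate (feasibleSet C₁ C₂ κ E) (ρ, R₁, R₂)) :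
    κ R₁ R₂ = E ρ ∧ (R₁ = C₁ ρ ∨ R₂ = C₂ ρ) :=
  ⟨cost_eq_energy_of_isMaxOn_sumRate hC₁_anti hC₂_anti hκ hκ_nonneg hE hE_zero hfeas hmax,
    eq_rate_or_eq_rate_of_isMaxOn_sumRate hC₁ hC₂ hC₁_one hκ hE_mono hfeas hmax⟩

end Maximizer

/-- Classical PS-SWIPT MAC with SIC decoding (Lemma 3): at a maximizer of the
sum rate over the SIC feasible set, the harvested energy is fully consumed,
i.e. `φ(R1*) + φ(R2*) = ψ(ρ*·a)`, and at least one of the two individual rate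
constraints holds with equality. -/
theorem stmt_8 (H1 H2 Np N : ℝ) (hH1 : 0 < H1) (hH2 : 0 < H2) (hNp : 0 < Np) (hN : 0 ≤ N)
    (Nu a : ℝ) (hNu : Nu = H2 + N) (ha : a = H1 + H2 + N)
    (φ ψ : ℝ → ℝ)
    (hφc : ContinuousOn φ (Set.Ici 0)) (hψc : ContinuousOn ψ (Set.Ici 0))
    (hφmap : ∀ x : ℝ, 0 ≤ x → 0 ≤ φ x) (hψmap : ∀ x : ℝ, 0 ≤ x → 0 ≤ ψ x)
    (hφ : StrictMonoOn φ (Set.Ici 0)) (hψ : StrictMonoOn ψ (Set.Ici 0))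
    (hφ0 : φ 0 = 0) (hψ0 : ψ 0 = 0)
    (Feas : ℝ → ℝ → ℝ → Prop)
    (hFeas : ∀ ρ R1 R2 : ℝ, Feas ρ R1 R2 ↔
      ρ ∈ Set.Icc (0 : ℝ) 1 ∧ 0 ≤ R1 ∧ 0 ≤ R2 ∧
      R1 ≤ (1/2) * Real.logb 2 (1 + (1 - ρ) * H1 / ((1 - ρ) * Nu + Np)) ∧
      R2 ≤ (1/2) * Real.logb 2 (1 + (1 - ρ) * H2 / ((1 - ρ) * N + Np)) ∧
      φ R1 + φ R2 ≤ ψ (ρ * a))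
    (ρs R1s R2s : ℝ) (hfeas : Feas ρs R1s R2s)
    (hmax : ∀ ρ R1 R2 : ℝ, Feas ρ R1 R2 → R1 + R2 ≤ R1s + R2s) :
    φ R1s + φ R2s = ψ (ρs * a) ∧
    (R1s = (1/2) * Real.logb 2 (1 + (1 - ρs) * H1 / ((1 - ρs) * Nu + Np)) ∨
     R2s = (1/2) * Real.logb 2 (1 + (1 - ρs) * H2 / ((1 - ρs) * N + Np))) := by
  have hNu_nonneg : 0 ≤ Nu := by linarith
  have ha_pos : 0 < a := by linarith
  have hunit : Icc (0 : ℝ) 1 ⊆ Iic 1 := Icc_subset_Iic_self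
  have hscale : MapsTo (· * a) (Icc 0 1) (Ici 0) := fun ρ hρ => mul_nonneg hρ.1 ha_pos.le
  have hfeas' := (hFeas ρs R1s R2s).1 hfeas
  exact stmt_8_general (C₁ := powerSplittingRate H1 Nu Np) (C₂ := powerSplittingRate H2 N Np)
    (κ := fun R₁ R₂ => φ R₁ + φ R₂) (E := fun ρ => ψ (ρ * a))
    ((strictAntiOn_powerSplittingRate hH1 hNu_nonneg hNp).mono hunit)
    ((strictAntiOn_powerSplittingRate hH2 hN hNp).mono hunit).antitoneOn
    ((continuousOn_powerSplittingRate hH1.le hNu_nonneg hNp).mono hunit)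
    ((continuousOn_powerSplittingRate hH2.le hN hNp).mono hunit)
    powerSplittingRate_one.le
    (hφc.add continuousOn_const)
    (add_nonneg (hφmap R1s hfeas'.2.1) (hφmap R2s hfeas'.2.2.1))
    (hψc.comp (by fun_prop) hscale)
    (hψ.comp ((strictMono_mul_right_of_pos ha_pos).strictMonoOn _) hscale)
    (by simp [hψ0])
    hfeas'
    fun x hx => hmax x.1 x.2.1 x.2.2 ((hFeas _ _ _).2 hx)
end

section
/- Let A, B, Np, β, η be positive reals and N ≥ 0; set a = A + B + N, ρ₂ = βB/(βB + η·a·Np), and assume ρ₂ ≤ ρ ≤ ρ₁ where ρ₁ is the smaller root of Q(ρ) = −B(η·a·Np + βB)ρ² + (η·a·Np(B + Np) + β(2B² + (A+B)Np))ρ − β(B² + A·Np + B·Np). Define R2(ρ) = (1/2)·log₂(1 + (1−ρ)B/Np) and R1(ρ) = (1/2)·log₂(1 + η·ρ·a/β − (1−ρ)B/Np). Then: (i) η·ρ·a/β − (1−ρ)B/Np ≥ 0, so R1(ρ) is well defined and nonnegative; (ii) R1(ρ) ≤ (1/2)·log₂(1 + (1−ρ)A/((1−ρ)B + Np)); and (iii)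 β(2^{2·R1(ρ)} − 1) + β(2^{2·R2(ρ)} − 1) = η·ρ·a. Hence (ρ, R1(ρ), R2(ρ)) is feasible for the SIC sum-rate problem with the decoding-cost constraint satisfied with equality. -/
/-!
The SNR that the harvested power can still pay for, once user 2 is decoded at full rate, exceeds
the SINR of user 1 by `Q ρ` divided by a positive quantity, so user 1's rate constraint says
`Q ρ ≤ 0`. Since `Q 0 ≤ 0 ≤ Q 1`, the smaller root of `Q` is at most `1`, and by the intermediate
value theorem `Q` cannot become positive between `0` and that root.
-/

section IntermediateValue

variable {α δ : Type*} [ConditionallyCompleteLinearOrder α] [TopologicalSpace α] [OrderTopology α]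
  [DenselyOrdered α] [LinearOrder δ] [TopologicalSpace δ] [OrderClosedTopology δ]
  {f : α → δ} {c : δ} {r x y : α}

theorem le_of_isLeast_eq_of_le_apply (hf : ContinuousOn f (Set.Icc x y))
    (hr : IsLeast {z | f z = c} r) (hxy : x ≤ y) (hx : f x ≤ c) (hy : c ≤ f y) : r ≤ y := by
  obtain ⟨z, hz, hfz⟩ := intermediate_value_Icc hxy hf ⟨hx, hy⟩
  exact (hr.2 hfz).trans hz.2

theorem apply_le_of_le_isLeast_eq (hf : ContinuousOn f (Set.Icc x y))
    (hr : IsLeast {z | f z = c} r) (hxy : x ≤ y) (hx : f x ≤ c) (hyr : y ≤ r) : f y ≤ c := by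
  by_contra! hy
  have hry : r = y := (le_of_isLeast_eq_of_le_apply hf hr hxy hx hy.le).antisymm hyr
  exact hy.ne' (hry ▸ hr.1)

end IntermediateValue

section RateAndCost

/-- The capacity, in bits per channel use, of the real Gaussian channel with signal-to-noise
ratio `x`. -/
noncomputable def gaussianCapacity (x : ℝ) : ℝ := (1 / 2) * Real.logb 2 (1 + x)

/-- The power `φ(R)` consumed by decoding at rate `R`, with cost coefficient `β`. -/
noncomputable def decodingCost (β R : ℝ) : ℝ := β * ((2 : ℝ) ^ (2 * R) - 1)

variable {x y : ℝ}

theorem gaussianCapacity_nonneg (hx : 0 ≤ x) : 0 ≤ gaussianCapacity x :=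
  mul_nonneg (by norm_num) (Real.logb_nonneg one_lt_two (by linarith))

theorem gaussianCapacity_le_gaussianCapacity (hx : -1 < x) (hxy : x ≤ y) :
    gaussianCapacity x ≤ gaussianCapacity y := by
  unfold gaussianCapacity
  gcongr
  · exact one_lt_two
  · linarith

theorem decodingCost_gaussianCapacity (β : ℝ) (hx : -1 < x) :
    decodingCost β (gaussianCapacity x) = β * x := by
  have hpow : (2 : ℝ) ^ (2 * gaussianCapacity x) = 1 + x := by
    rw [gaussianCapacity, ← mul_assoc, mul_one_div_cancel two_ne_zero, one_mul,
      Real.rpow_logb two_pos (by norm_num) (by linarith)]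
  rw [decodingCost, hpow, add_sub_cancel_left]

end RateAndCost

section SuccessiveCancellation

/-- The signal-to-interference-plus-noise ratio of user 1, who is decoded first and sees user 2 as
noise; a fraction `1 - ρ` of the received signal goes to the decoder. -/
noncomputable def firstUserSINR (A B Np ρ : ℝ) : ℝ := (1 - ρ) * A / ((1 - ρ) * B + Np)

/-- The signal-to-noise ratio that the harvested power `η * ρ * a` still allows for user 1 after
paying for user 2 at full rate: decoding at the capacity for the ratio `x` costs `β * x`. -/
noncomputable def residualSNR (B Np β η a ρ : ℝ) : ℝ := η * ρ * a / β - (1 - ρ) * B / Np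

/-- The quadratic `Q` whose sign decides whether `residualSNR` exceeds `firstUserSINR`. -/
def feasibilityQuadratic (A B Np β η a x : ℝ) : ℝ :=
  -(B * (η * a * Np + β * B)) * x ^ 2
    + (η * a * Np * (B + Np) + β * (2 * B ^ 2 + (A + B) * Np)) * x
    - β * (B ^ 2 + A * Np + B * Np)

variable {A B Np β η a ρ ρ₁ : ℝ}

theorem mul_residualSNR_add (hβ : β ≠ 0) :
    β * residualSNR B Np β η a ρ + β * ((1 - ρ) * B / Np) = η * ρ * a := by
  rw [residualSNR, ← mul_add, sub_add_cancel, mul_div_cancel₀ _ hβ]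

theorem residualSNR_nonneg_iff (hβ : 0 < β) (hNp : 0 < Np) (hD : 0 < β * B + η * a * Np) :
    0 ≤ residualSNR B Np β η a ρ ↔ β * B / (β * B + η * a * Np) ≤ ρ := by
  rw [residualSNR, sub_nonneg, div_le_div_iff₀ hNp hβ, div_le_iff₀ hD]
  constructor <;> intro h <;> linarith

theorem residualSNR_sub_firstUserSINR (hβ : β ≠ 0) (hNp : Np ≠ 0) (hE : (1 - ρ) * B + Np ≠ 0) :
    residualSNR B Np β η a ρ - firstUserSINR A B Np ρ =
      feasibilityQuadratic A B Np β η a ρ / (β * Np * ((1 - ρ) * B + Np)) := by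
  unfold residualSNR firstUserSINR feasibilityQuadratic
  field_simp
  ring

theorem residualSNR_le_firstUserSINR_iff (hβ : 0 < β) (hNp : 0 < Np)
    (hE : 0 < (1 - ρ) * B + Np) :
    residualSNR B Np β η a ρ ≤ firstUserSINR A B Np ρ ↔
      feasibilityQuadratic A B Np β η a ρ ≤ 0 := by
  rw [← sub_nonpos, residualSNR_sub_firstUserSINR hβ.ne' hNp.ne' hE.ne',
    div_le_iff₀ (by positivity), zero_mul]

theorem continuous_feasibilityQuadratic : Continuous (feasibilityQuadratic A B Np β η a) := by
  unfold feasibilityQuadratic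
  fun_prop

theorem feasibilityQuadratic_zero_nonpos (hA : 0 ≤ A) (hB : 0 ≤ B) (hNp : 0 ≤ Np) (hβ : 0 ≤ β) :
    feasibilityQuadratic A B Np β η a 0 ≤ 0 := by
  have hconst : 0 ≤ β * (B ^ 2 + A * Np + B * Np) := by positivity
  unfold feasibilityQuadratic
  linarith

theorem feasibilityQuadratic_one : feasibilityQuadratic A B Np β η a 1 = η * a * Np ^ 2 := by
  unfold feasibilityQuadratic
  ring

theorem isLeast_root_feasibilityQuadratic_le_one (hA : 0 ≤ A) (hB : 0 ≤ B) (hNp : 0 ≤ Np)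
    (hβ : 0 ≤ β) (hηa : 0 ≤ η * a)
    (hρ₁ : IsLeast {x | feasibilityQuadratic A B Np β η a x = 0} ρ₁) : ρ₁ ≤ 1 := by
  refine le_of_isLeast_eq_of_le_apply continuous_feasibilityQuadratic.continuousOn hρ₁ zero_le_one
    (feasibilityQuadratic_zero_nonpos hA hB hNp hβ) ?_
  rw [feasibilityQuadratic_one]
  positivity

theorem residualSNR_le_firstUserSINR (hA : 0 ≤ A) (hB : 0 ≤ B) (hNp : 0 < Np) (hβ : 0 < β)
    (hρ₁ : IsLeast {x | feasibilityQuadratic A B Np β η a x = 0} ρ₁)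
    (hρ₀ : 0 ≤ ρ) (hρ : ρ ≤ ρ₁) (hρ_one : ρ ≤ 1) :
    residualSNR B Np β η a ρ ≤ firstUserSINR A B Np ρ := by
  have hE : 0 < (1 - ρ) * B + Np :=
    add_pos_of_nonneg_of_pos (mul_nonneg (sub_nonneg.2 hρ_one) hB) hNp
  rw [residualSNR_le_firstUserSINR_iff hβ hNp hE]
  exact apply_le_of_le_isLeast_eq continuous_feasibilityQuadratic.continuousOn hρ₁ hρ₀
    (feasibilityQuadratic_zero_nonpos hA hB hNp.le hβ.le) hρ

end SuccessiveCancellation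

/-- Classical PS-SWIPT MAC with SIC, linear EH model and convex decoding cost
(feasibility of Lemma 4's candidate point): for `ρ₂ ≤ ρ ≤ ρ₁`, where `ρ₁` is
the smaller root of the feasibility quadratic `Q`, the rates
`R2(ρ) = (1/2)log₂(1 + (1−ρ)B/Np)` and
`R1(ρ) = (1/2)log₂(1 + ηρa/β − (1−ρ)B/Np)` are well defined, `R1(ρ)`
satisfies user 1's SIC rate constraint, and the decoding-cost constraint
holds with equality. -/
theorem stmt_9 (A B Np β η N : ℝ) (hA : 0 < A) (hB : 0 < B) (hNp : 0 < Np)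
    (hβ : 0 < β) (hη : 0 < η) (hN : 0 ≤ N)
    (a : ℝ) (ha : a = A + B + N)
    (ρ₂ : ℝ) (hρ₂ : ρ₂ = β * B / (β * B + η * a * Np))
    (Q : ℝ → ℝ)
    (hQ : ∀ x : ℝ, Q x = -(B * (η * a * Np + β * B)) * x ^ 2
      + (η * a * Np * (B + Np) + β * (2 * B ^ 2 + (A + B) * Np)) * x
      - β * (B ^ 2 + A * Np + B * Np))
    (ρ₁ : ℝ) (hroot : Q ρ₁ = 0) (hsmaller : ∀ r : ℝ, Q r = 0 → ρ₁ ≤ r)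
    (ρ : ℝ) (hρl : ρ₂ ≤ ρ) (hρu : ρ ≤ ρ₁)
    (R1 R2 : ℝ)
    (hR2 : R2 = (1/2) * Real.logb 2 (1 + (1 - ρ) * B / Np))
    (hR1 : R1 = (1/2) * Real.logb 2 (1 + η * ρ * a / β - (1 - ρ) * B / Np)) :
    (0 ≤ η * ρ * a / β - (1 - ρ) * B / Np ∧ 0 ≤ R1) ∧
    R1 ≤ (1/2) * Real.logb 2 (1 + (1 - ρ) * A / ((1 - ρ) * B + Np)) ∧
    β * ((2 : ℝ) ^ (2 * R1) - 1) + β * ((2 : ℝ) ^ (2 * R2) - 1) = η * ρ * a := by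
  obtain rfl : Q = feasibilityQuadratic A B Np β η a := funext hQ
  have hρ₁ : IsLeast {x | feasibilityQuadratic A B Np β η a x = 0} ρ₁ := ⟨hroot, hsmaller⟩
  have ha_pos : 0 < a := by rw [ha]; positivity
  have hρ₀ : 0 ≤ ρ := le_trans (by rw [hρ₂]; positivity) hρl
  have hρ_one : ρ ≤ 1 := hρu.trans <|
    isLeast_root_feasibilityQuadratic_le_one hA.le hB.le hNp.le hβ.le (by positivity) hρ₁
  have hres : 0 ≤ residualSNR B Np β η a ρ :=
    (residualSNR_nonneg_iff hβ hNp (by positivity)).2 (hρ₂ ▸ hρl)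
  have hsnr : 0 ≤ (1 - ρ) * B / Np :=
    div_nonneg (mul_nonneg (sub_nonneg.2 hρ_one) hB.le) hNp.le
  have hR1_capacity : R1 = gaussianCapacity (residualSNR B Np β η a ρ) := by
    rw [hR1, add_sub_assoc, gaussianCapacity, residualSNR]
  have hR2_capacity : R2 = gaussianCapacity ((1 - ρ) * B / Np) := hR2
  rw [hR1_capacity, hR2_capacity]
  refine ⟨⟨hres, gaussianCapacity_nonneg hres⟩, ?_, ?_⟩
  · exact gaussianCapacity_le_gaussianCapacity (by linarith)
      (residualSNR_le_firstUserSINR hA.le hB.le hNp hβ hρ₁ hρ₀ hρu hρ_one)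
  · change decodingCost β _ + decodingCost β _ = _
    rw [decodingCost_gaussianCapacity β (by linarith),
      decodingCost_gaussianCapacity β (by linarith), mul_residualSNR_add hβ.ne']
end

section
/- Let A, B, Np, β, η be positive reals and N ≥ 0; set a = A + B + N, C = A + B, Δ = Np·sqrt( (η·a·B − βC)² + η·a·(η·a·Np² + 2η·a·Np·B + 2βC·Np + 4βB²) ), and Q(ρ) = −B(η·a·Np + βB)ρ² + (η·a·Np(B + Np) + β(2B² + C·Np))ρ − β(B² + A·Np + B·Np). Then: (i) Q(0) = −β(B² + A·Np + B·Np) < 0; (ii) Q(1) = η·a·Np² > 0; (iii) Q has exactly two real roots, the smaller of which equals ρ₁ = (1/2)·(1 + (βB² + βC·Np + η·a·Np² − Δ)/(βB² + η·a·Np·B)) and satisfies 0 < ρ₁ < 1, while the larger root is strictly greater than 1. Consequently Q(ρ) ≤ 0 for all ρ ∈ [0, ρ₁]. -/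
/-!
For `a < 0` and `discrim a b c = s ^ 2`, completing the square as
`4a(ax² + bx + c) = (2ax + b)² - s²` shows that the quadratic is positive exactly where
`|2ax + b| < s`, that is, strictly between its two roots. The feasibility quadratic is concave with
`Q 1 > 0`, so its roots lie on either side of `1`, and `Q 0 < 0` then forces the smaller root to be
positive.
-/

section Quadratic

variable {K : Type*}

lemma four_mul_mul_quadratic_eq_sq_sub_discrim [CommRing K] (a b c x : K) :
    4 * a * (a * (x * x) + b * x + c) = (2 * a * x + b) ^ 2 - discrim a b c := by
  rw [discrim]
  ring

variable [Field K] [LinearOrder K] [IsStrictOrderedRing K] {a b c s : K}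

lemma quadratic_pos_iff_of_neg (ha : a < 0) (hs : 0 ≤ s) (h : discrim a b c = s ^ 2) (x : K) :
    0 < a * (x * x) + b * x + c ↔ (-b + s) / (2 * a) < x ∧ x < (-b - s) / (2 * a) := by
  have h2a : 2 * a < 0 := by linarith
  have h4a : 4 * a < 0 := by linarith
  calc 0 < a * (x * x) + b * x + c
      ↔ 4 * a * (a * (x * x) + b * x + c) < 0 := (smul_neg_iff_of_neg_left h4a).symm
    _ ↔ (2 * a * x + b) ^ 2 < s ^ 2 := by
        rw [four_mul_mul_quadratic_eq_sq_sub_discrim, h, sub_neg]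
    _ ↔ -s < 2 * a * x + b ∧ 2 * a * x + b < s := by rw [sq_lt_sq, abs_of_nonneg hs, abs_lt]
    _ ↔ (-b + s) / (2 * a) < x ∧ x < (-b - s) / (2 * a) := by
        rw [div_lt_iff_of_neg' h2a, lt_div_iff_of_neg' h2a]
        constructor <;> rintro ⟨_, _⟩ <;> constructor <;> linarith

lemma quadratic_neg_iff_of_neg (ha : a < 0) (hs : 0 ≤ s) (h : discrim a b c = s ^ 2) (x : K) :
    a * (x * x) + b * x + c < 0 ↔ x < (-b + s) / (2 * a) ∨ (-b - s) / (2 * a) < x := by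
  have h2a : 2 * a < 0 := by linarith
  have h4a : 4 * a < 0 := by linarith
  calc a * (x * x) + b * x + c < 0
      ↔ 0 < 4 * a * (a * (x * x) + b * x + c) := (smul_pos_iff_of_neg_left h4a).symm
    _ ↔ s ^ 2 < (2 * a * x + b) ^ 2 := by
        rw [four_mul_mul_quadratic_eq_sq_sub_discrim, h, sub_pos]
    _ ↔ s < 2 * a * x + b ∨ s < -(2 * a * x + b) := by rw [sq_lt_sq, abs_of_nonneg hs, lt_abs]
    _ ↔ x < (-b + s) / (2 * a) ∨ (-b - s) / (2 * a) < x := by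
        rw [div_lt_iff_of_neg' h2a, lt_div_iff_of_neg' h2a]
        constructor <;> rintro (_ | _) <;> first | (left; linarith) | (right; linarith)

lemma lt_quadratic_roots_of_neg_of_pos {u v : K} (ha : a < 0) (hs : 0 ≤ s)
    (h : discrim a b c = s ^ 2) (huv : u < v) (hu : a * (u * u) + b * u + c < 0)
    (hv : 0 < a * (v * v) + b * v + c) :
    u < (-b + s) / (2 * a) ∧ (-b + s) / (2 * a) < v ∧ v < (-b - s) / (2 * a) := by
  obtain ⟨hv₁, hv₂⟩ := (quadratic_pos_iff_of_neg ha hs h v).1 hv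
  have hu₁ := ((quadratic_neg_iff_of_neg ha hs h u).1 hu).resolve_right (huv.trans hv₂).not_gt
  exact ⟨hu₁, hv₁, hv₂⟩

end Quadratic

namespace SICFeasibility

section CommRing

variable {K : Type*} [CommRing K]

/-- The coefficient of `ρ ^ 2` in the feasibility quadratic; here and below `κ` stands for the
product `η * a`. -/
def leadCoeff (κ β B Np : K) : K := -(B * (κ * Np + β * B))

/-- The coefficient of `ρ` in the feasibility quadratic. -/
def linCoeff (κ β B C Np : K) : K := κ * Np * (B + Np) + β * (2 * B ^ 2 + C * Np)

/-- The constant term of the feasibility quadratic, where `A * Np + B * Np` is written `C * Np`. -/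
def constCoeff (β B C Np : K) : K := -(β * (B ^ 2 + C * Np))

/-- The expression under the square root in the paper's `Δ`. -/
def radicand (κ β B C Np : K) : K :=
  (κ * B - β * C) ^ 2 + κ * (κ * Np ^ 2 + 2 * κ * Np * B + 2 * β * C * Np + 4 * β * B ^ 2)

lemma discrim_eq_sq_mul_radicand (κ β B C Np : K) :
    discrim (leadCoeff κ β B Np) (linCoeff κ β B C Np) (constCoeff β B C Np) =
      Np ^ 2 * radicand κ β B C Np := by
  rw [discrim, leadCoeff, linCoeff, constCoeff, radicand]
  ring

end CommRing

lemma smaller_root_eq {K : Type*} [Field K] [NeZero (2 : K)] {κ β B Np : K}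
    (hlead : leadCoeff κ β B Np ≠ 0) (C s : K) :
    (-linCoeff κ β B C Np + s) / (2 * leadCoeff κ β B Np) =
      1 / 2 * (1 + (β * B ^ 2 + β * C * Np + κ * Np ^ 2 - s) / (β * B ^ 2 + κ * Np * B)) := by
  have hden : β * B ^ 2 + κ * Np * B = -leadCoeff κ β B Np := by rw [leadCoeff]; ring
  have hlin : linCoeff κ β B C Np =
      -leadCoeff κ β B Np + (β * B ^ 2 + β * C * Np + κ * Np ^ 2) := by
    rw [leadCoeff, linCoeff]
    ring
  rw [hden, hlin]
  field_simp
  ring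

section Ordered

variable {K : Type*} [CommRing K] [LinearOrder K] [IsStrictOrderedRing K] {κ β B C Np : K}

lemma leadCoeff_neg (hκ : 0 < κ) (hβ : 0 < β) (hB : 0 < B) (hNp : 0 < Np) :
    leadCoeff κ β B Np < 0 :=
  neg_neg_of_pos (by positivity)

lemma radicand_nonneg (hκ : 0 ≤ κ) (hβ : 0 ≤ β) (hB : 0 ≤ B) (hC : 0 ≤ C) (hNp : 0 ≤ Np) :
    0 ≤ radicand κ β B C Np := by
  rw [radicand]
  positivity

end Ordered

lemma discrim_eq_sq_mul_sqrt_radicand {κ β B C Np : ℝ} (h : 0 ≤ radicand κ β B C Np) :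
    discrim (leadCoeff κ β B Np) (linCoeff κ β B C Np) (constCoeff β B C Np) =
      (Np * √(radicand κ β B C Np)) ^ 2 := by
  rw [discrim_eq_sq_mul_radicand, mul_pow, Real.sq_sqrt h]

end SICFeasibility

open SICFeasibility

/-- Classical PS-SWIPT MAC with SIC (root structure of the feasibility
quadratic `Q` from Appendix B): `Q(0) < 0`, `Q(1) = ηaNp² > 0`, `Q` has
exactly two real roots — the smaller being
`ρ₁ = (1/2)(1 + (βB² + βCNp + ηaNp² − Δ)/(βB² + ηaNpB)) ∈ (0,1)` and the
larger exceeding `1` — and consequently `Q ≤ 0` on `[0, ρ₁]`. -/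
theorem stmt_12 (A B Np β η N : ℝ) (hA : 0 < A) (hB : 0 < B) (hNp : 0 < Np)
    (hβ : 0 < β) (hη : 0 < η) (hN : 0 ≤ N)
    (a C : ℝ) (ha : a = A + B + N) (hC : C = A + B)
    (Δ : ℝ)
    (hΔ : Δ = Np * Real.sqrt ((η * a * B - β * C) ^ 2
      + η * a * (η * a * Np ^ 2 + 2 * η * a * Np * B + 2 * β * C * Np + 4 * β * B ^ 2)))
    (Q : ℝ → ℝ)
    (hQ : ∀ x : ℝ, Q x = -(B * (η * a * Np + β * B)) * x ^ 2
      + (η * a * Np * (B + Np) + β * (2 * B ^ 2 + C * Np)) * x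
      - β * (B ^ 2 + A * Np + B * Np))
    (ρ₁ : ℝ)
    (hρ₁ : ρ₁ = (1/2) * (1 + (β * B ^ 2 + β * C * Np + η * a * Np ^ 2 - Δ)
      / (β * B ^ 2 + η * a * Np * B))) :
    (Q 0 = -(β * (B ^ 2 + A * Np + B * Np)) ∧ Q 0 < 0) ∧
    (Q 1 = η * a * Np ^ 2 ∧ 0 < Q 1) ∧
    (Q ρ₁ = 0 ∧ 0 < ρ₁ ∧ ρ₁ < 1 ∧
      ∃ r : ℝ, Q r = 0 ∧ 1 < r ∧ ρ₁ < r ∧ ∀ s : ℝ, Q s = 0 → s = ρ₁ ∨ s = r) ∧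
    ∀ ρ ∈ Set.Icc (0 : ℝ) ρ₁, Q ρ ≤ 0 := by
  have hκ : 0 < η * a := by rw [ha]; positivity
  have hlead := leadCoeff_neg hκ hβ hB hNp
  have hQ' (x : ℝ) : Q x = leadCoeff (η * a) β B Np * (x * x) + linCoeff (η * a) β B C Np * x
      + constCoeff β B C Np := by
    rw [hQ, hC, leadCoeff, linCoeff, constCoeff]; ring
  have hrad : 0 ≤ radicand (η * a) β B C Np :=
    radicand_nonneg hκ.le hβ.le hB.le (hC ▸ (add_pos hA hB).le) hNp.le
  have hΔ' : Δ = Np * √(radicand (η * a) β B C Np) := by rw [hΔ, radicand]; ring_nf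
  have hΔ₀ : 0 ≤ Δ := by rw [hΔ']; positivity
  have hdiscrim := hΔ' ▸ discrim_eq_sq_mul_sqrt_radicand hrad
  have hQ₀ : Q 0 = -(β * (B ^ 2 + A * Np + B * Np)) := by rw [hQ]; ring
  have hQ₁ : Q 1 = η * a * Np ^ 2 := by rw [hQ, hC]; ring
  have hQ₀_neg : Q 0 < 0 := by rw [hQ₀, neg_lt_zero]; positivity
  have hQ₁_pos : 0 < Q 1 := by rw [hQ₁]; positivity
  rw [← smaller_root_eq hlead.ne] at hρ₁
  obtain ⟨hρ₁_pos, hρ₁_lt, hr⟩ := lt_quadratic_roots_of_neg_of_pos hlead hΔ₀ hdiscrim one_pos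
    (hQ' 0 ▸ hQ₀_neg) (hQ' 1 ▸ hQ₁_pos)
  have hroots := quadratic_eq_zero_iff hlead.ne (hdiscrim.trans (sq Δ))
  simp only [← hρ₁, ← hQ'] at hρ₁_pos hρ₁_lt hroots
  refine ⟨⟨hQ₀, hQ₀_neg⟩, ⟨hQ₁, hQ₁_pos⟩, ⟨(hroots _).2 (.inl rfl), hρ₁_pos, hρ₁_lt, _,
    (hroots _).2 (.inr rfl), hr, hρ₁_lt.trans hr, fun s => (hroots s).1⟩, fun ρ hρ => ?_⟩
  rw [hQ', ← not_lt, quadratic_pos_iff_of_neg hlead hΔ₀ hdiscrim, ← hρ₁]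
  exact fun h => hρ.2.not_gt h.1
end

section
/- Let A, B, Np, β, η be positive reals and N ≥ 0; set a = A + B + N, C = A + B, ρ₂ = βB/(βB + η·a·Np), and let Q(ρ) = −B(η·a·Np + βB)ρ² + (η·a·Np(B + Np) + β(2B² + C·Np))ρ − β(B² + A·Np + B·Np) with smaller root ρ₁ as in Lemma 4. Then 0 < ρ₂ < 1, Q(ρ₂) ≤ 0, and consequently ρ₂ ≤ ρ₁. In other words, the smallest power-splitting factor ρ₂ for which the harvested power η·ρ·a covers the cost β(1−ρ)B/Np of decoding user 2's message does not exceed ρ₁, so the feasible interval [ρ₂, ρ₁] is nonempty. -/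
/-!
Clearing denominators, the surplus of harvested power over decoding cost is
`Q ρ = (e ρ n - β (1 - ρ) B) ((1 - ρ) B + n) - β (1 - ρ) A n`, where `e = η a` and `n = Np`.
At `ρ₂` the first factor vanishes, so `Q ρ₂ = -β (1 - ρ₂) A n ≤ 0`, while `Q 1 = e n² > 0`.
Since `Q` is concave and `ρ₂ < 1`, it is strictly negative to the left of `ρ₂`; hence both of its
roots, and not only the smaller one, are at least `ρ₂`.
-/

section Concave

variable {𝕜 : Type*} [Field 𝕜] [LinearOrder 𝕜] [IsStrictOrderedRing 𝕜]

theorem le_of_concaveOn_of_le_of_lt {s : Set 𝕜} {f : 𝕜 → 𝕜} (hf : ConcaveOn 𝕜 s f) {r x y : 𝕜}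
    (hr : r ∈ s) (hy : y ∈ s) (hxy : x < y) (hfr : f x ≤ f r) (hfy : f x < f y) : x ≤ r := by
  by_contra! hrx
  have hx : x ∈ openSegment 𝕜 r y := by
    rw [openSegment_eq_Ioo (hrx.trans hxy)]
    exact ⟨hrx, hxy⟩
  exact hfr.not_gt (hf.left_lt_of_lt_right hr hy hx hfy)

theorem concaveOn_quadratic {p : 𝕜} (hp : p ≤ 0) (q r : 𝕜) :
    ConcaveOn 𝕜 Set.univ fun x => p * (x * x) + q * x + r := by
  have hsq : ConcaveOn 𝕜 Set.univ fun x : 𝕜 => p * (x * x) := by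
    simpa [pow_two] using (even_two.convexOn_pow (𝕜 := 𝕜)).neg.smul (neg_nonneg.2 hp)
  exact (hsq.add ((LinearMap.mulLeft 𝕜 q).concaveOn convex_univ)).add_const r

end Concave

section Field

variable {𝕜 : Type*} [Field 𝕜] {A B n β e ρ : 𝕜}

/-- The power-splitting factor `ρ₂` at which the harvested power `e ρ` equals the cost
`β (1 - ρ) B / n` of decoding user 2's message. -/
def balanceFactor (B n β e : 𝕜) : 𝕜 :=
  β * B / (β * B + e * n)

/-- The feasibility quadratic `Q`: the surplus at power-splitting factor `ρ` of the harvested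
power `e ρ` over the decoding costs `β (1 - ρ) A / ((1 - ρ) B + n)` of user 1 (decoded first) and
`β (1 - ρ) B / n` of user 2, multiplied by the common denominator `n ((1 - ρ) B + n)`. -/
def clearedSurplus (A B n β e ρ : 𝕜) : 𝕜 :=
  (e * ρ * n - β * (1 - ρ) * B) * ((1 - ρ) * B + n) - β * (1 - ρ) * A * n

theorem mul_balanceFactor_mul_eq (hden : β * B + e * n ≠ 0) :
    e * balanceFactor B n β e * n = β * (1 - balanceFactor B n β e) * B := by
  unfold balanceFactor
  field_simp
  ring

theorem clearedSurplus_one : clearedSurplus A B n β e 1 = e * n ^ 2 := by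
  unfold clearedSurplus
  ring

theorem clearedSurplus_eq_quadratic :
    clearedSurplus A B n β e ρ = -(B * (e * n + β * B)) * (ρ * ρ)
      + (e * n * (B + n) + β * (2 * B ^ 2 + (A + B) * n)) * ρ
      + -(β * (B ^ 2 + A * n + B * n)) := by
  unfold clearedSurplus
  ring

theorem clearedSurplus_eq_zero_of_sq_eq_discrim [NeZero (2 : 𝕜)]
    (hden : β * B ^ 2 + e * n * B ≠ 0) {Δ : 𝕜}
    (hΔ : Δ ^ 2 = n ^ 2 * ((e * B - β * (A + B)) ^ 2
      + e * (e * n ^ 2 + 2 * e * n * B + 2 * β * (A + B) * n + 4 * β * B ^ 2))) :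
    clearedSurplus A B n β e (1 / 2 * (1 + (β * B ^ 2 + β * (A + B) * n + e * n ^ 2 - Δ)
      / (β * B ^ 2 + e * n * B))) = 0 := by
  have hlead : -(B * (e * n + β * B)) = -(β * B ^ 2 + e * n * B) := by ring
  have hdiscrim : discrim (-(β * B ^ 2 + e * n * B))
      (e * n * (B + n) + β * (2 * B ^ 2 + (A + B) * n)) (-(β * (B ^ 2 + A * n + B * n)))
      = Δ * Δ := by
    rw [← pow_two, hΔ, discrim]
    ring
  rw [clearedSurplus_eq_quadratic, hlead, quadratic_eq_zero_iff (neg_ne_zero.2 hden) hdiscrim]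
  left
  rw [one_add_div hden, div_mul_div_comm, ← neg_div_neg_eq]
  congr 1 <;> ring

end Field

section Order

variable {𝕜 : Type*} [Field 𝕜] [LinearOrder 𝕜] [IsStrictOrderedRing 𝕜] {A B n β e ρ : 𝕜}

theorem balanceFactor_pos (hB : 0 < B) (hn : 0 ≤ n) (hβ : 0 < β) (he : 0 ≤ e) :
    0 < balanceFactor B n β e := by
  unfold balanceFactor
  positivity

theorem balanceFactor_lt_one (hB : 0 ≤ B) (hn : 0 < n) (hβ : 0 ≤ β) (he : 0 < e) :
    balanceFactor B n β e < 1 :=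
  (div_lt_one (by positivity)).2 (lt_add_of_pos_right _ (mul_pos he hn))

theorem concaveOn_clearedSurplus (hB : 0 ≤ B) (hn : 0 ≤ n) (hβ : 0 ≤ β) (he : 0 ≤ e) :
    ConcaveOn 𝕜 Set.univ (clearedSurplus A B n β e) :=
  (concaveOn_quadratic (neg_nonpos.2 (by positivity)) _ _).congr
    fun _ _ => clearedSurplus_eq_quadratic.symm

theorem clearedSurplus_nonpos_of_le (hA : 0 ≤ A) (hB : 0 ≤ B) (hn : 0 ≤ n) (hβ : 0 ≤ β)
    (hρ : ρ ≤ 1) (hcost : e * ρ * n ≤ β * (1 - ρ) * B) : clearedSurplus A B n β e ρ ≤ 0 := by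
  rw [← sub_nonneg] at hρ
  have hfactor : (e * ρ * n - β * (1 - ρ) * B) * ((1 - ρ) * B + n) ≤ 0 :=
    mul_nonpos_of_nonpos_of_nonneg (sub_nonpos.2 hcost) (by positivity)
  exact sub_nonpos.2 (hfactor.trans (by positivity))

theorem clearedSurplus_balanceFactor_nonpos (hA : 0 ≤ A) (hB : 0 ≤ B) (hn : 0 < n) (hβ : 0 ≤ β)
    (he : 0 < e) : clearedSurplus A B n β e (balanceFactor B n β e) ≤ 0 :=
  clearedSurplus_nonpos_of_le hA hB hn.le hβ (balanceFactor_lt_one hB hn hβ he).le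
    (mul_balanceFactor_mul_eq (by positivity)).le

theorem balanceFactor_le_of_clearedSurplus_nonneg (hA : 0 ≤ A) (hB : 0 ≤ B) (hn : 0 < n)
    (hβ : 0 ≤ β) (he : 0 < e) (hρ : 0 ≤ clearedSurplus A B n β e ρ) :
    balanceFactor B n β e ≤ ρ := by
  have hbalance := clearedSurplus_balanceFactor_nonpos hA hB hn hβ he
  have hone : 0 < clearedSurplus A B n β e 1 := by
    rw [clearedSurplus_one]
    positivity
  exact le_of_concaveOn_of_le_of_lt (concaveOn_clearedSurplus hB hn.le hβ he.le)
    (Set.mem_univ _) (Set.mem_univ _) (balanceFactor_lt_one hB hn hβ he)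
    (hbalance.trans hρ) (hbalance.trans_lt hone)

end Order

/-- Classical PS-SWIPT MAC with SIC: with `ρ₂ = βB/(βB + ηaNp)` (the smallest
PS factor for which the harvested power covers the cost of decoding user 2's
message) and `ρ₁` the smaller root of the feasibility quadratic `Q` (as in
Lemma 4), one has `0 < ρ₂ < 1`, `Q(ρ₂) ≤ 0`, and `ρ₂ ≤ ρ₁`; hence the
feasible interval `[ρ₂, ρ₁]` is nonempty. -/
theorem stmt_13 (A B Np β η N : ℝ) (hA : 0 < A) (hB : 0 < B) (hNp : 0 < Np)
    (hβ : 0 < β) (hη : 0 < η) (hN : 0 ≤ N)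
    (a C : ℝ) (ha : a = A + B + N) (hC : C = A + B)
    (ρ₂ : ℝ) (hρ₂ : ρ₂ = β * B / (β * B + η * a * Np))
    (Q : ℝ → ℝ)
    (hQ : ∀ x : ℝ, Q x = -(B * (η * a * Np + β * B)) * x ^ 2
      + (η * a * Np * (B + Np) + β * (2 * B ^ 2 + C * Np)) * x
      - β * (B ^ 2 + A * Np + B * Np))
    (Δ : ℝ)
    (hΔ : Δ = Np * Real.sqrt ((η * a * B - β * C) ^ 2
      + η * a * (η * a * Np ^ 2 + 2 * η * a * Np * B + 2 * β * C * Np + 4 * β * B ^ 2)))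
    (ρ₁ : ℝ)
    (hρ₁ : ρ₁ = (1/2) * (1 + (β * B ^ 2 + β * C * Np + η * a * Np ^ 2 - Δ)
      / (β * B ^ 2 + η * a * Np * B))) :
    (0 < ρ₂ ∧ ρ₂ < 1) ∧ Q ρ₂ ≤ 0 ∧ ρ₂ ≤ ρ₁ := by
  have ha_pos : 0 < a := by linarith
  have he : 0 < η * a := mul_pos hη ha_pos
  subst hC
  obtain rfl : Q = clearedSurplus A B Np β (η * a) := by
    funext x
    rw [hQ, clearedSurplus_eq_quadratic]
    ring
  obtain rfl : ρ₂ = balanceFactor B Np β (η * a) := hρ₂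
  have hΔ_sq : Δ ^ 2 = Np ^ 2 * ((η * a * B - β * (A + B)) ^ 2 + η * a * (η * a * Np ^ 2
      + 2 * (η * a) * Np * B + 2 * β * (A + B) * Np + 4 * β * B ^ 2)) := by
    rw [hΔ, mul_pow, Real.sq_sqrt (by positivity)]
    ring
  have hroot : clearedSurplus A B Np β (η * a) ρ₁ = 0 :=
    hρ₁ ▸ clearedSurplus_eq_zero_of_sq_eq_discrim (by positivity) hΔ_sq
  exact ⟨⟨balanceFactor_pos hB hNp.le hβ he.le, balanceFactor_lt_one hB.le hNp hβ.le he⟩,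
    clearedSurplus_balanceFactor_nonpos hA.le hB.le hNp hβ.le he,
    balanceFactor_le_of_clearedSurplus_nonneg hA.le hB.le hNp hβ.le he hroot.ge⟩
end

section
/- Consider the PS-SWIPT MAC with user cooperation. Let h1, h2, b, c, PU1, PU2, Np > 0 and N ≥ 0, let g(x) = (1/2)·log₂(1+x), and let φ, φ1, φ2, ψ : [0,∞) → [0,∞) be continuous and strictly increasing. For variables (ρ, P12, P21, Pu1, Pu2) ∈ [0,1] × [0,∞)⁴ set S = h1²(P12 + Pu1) + h2²(P21 + Pu2) + 2·h1·h2·sqrt(Pu1·Pu2), and consider the constraints: (i) φ1(g(c·P21)) + P12 + Pu1 ≤ PU1; (ii) φ2(g(b·P12)) + P21 + Pu2 ≤ PU2; (iii) φ(g(b·P12) + g(c·P21)) ≤ ψ(ρ·(S + N)); (iv) g(b·P12) + g(c·P21) ≤ g((1−ρ)S/((1−ρ)N + Np)). Let μ1, μ2 > 0 and suppose (ρ*, P12*, P21*, Pu1*, Pu2*) maximizes μ1·g(b·P12) + μ2·g(c·P21) over the feasible set, with 0 < ρ* < 1, Pu1* > 0 and Pu2* > 0. Then all four constraints (i)–(iv)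 hold with equality at the maximizer. -/
/-!
Suppose the destination had slack in both of its constraints, (iii) and (iv). User 1 could then move
a little power from its common message to its fresh message, and user 2 could pay for its changed
decoding cost out of its own common-message power: the expenditures in (i) and (ii) do not change,
(iii) and (iv) survive by continuity, and the objective grows with `P12`. So at the fresh powers of
a maximizer, no choice of `0 < ρ < 1` and positive common powers within budget gives slack in both.
But slack in any single constraint would produce such a choice: unused budget in (i) or (ii) raises
the received power, which relaxes (iii) and (iv) together; slack in (iii) is traded for slack in
(iv) by lowering `ρ`, and slack in (iv) for slack in (iii) by raising `ρ`.
-/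

open Set Filter Topology

/-- The rate `g` of the paper: the capacity of a real Gaussian channel as a function of the
signal-to-noise ratio. -/
noncomputable def gaussianRate (x : ℝ) : ℝ := (1 / 2) * Real.logb 2 (1 + x)

lemma gaussianRate_zero : gaussianRate 0 = 0 := by simp [gaussianRate]

lemma strictMonoOn_gaussianRate : StrictMonoOn gaussianRate (Ioi (-1)) := by
  intro x hx y _ hxy
  have hx : 0 < 1 + x := by linarith [mem_Ioi.1 hx]
  exact mul_lt_mul_of_pos_left (Real.logb_lt_logb one_lt_two hx (by linarith)) one_half_pos

lemma continuousOn_gaussianRate : ContinuousOn gaussianRate (Ioi (-1)) := by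
  have hlog : ContinuousOn (fun x : ℝ ↦ Real.log (1 + x)) (Ioi (-1)) :=
    ContinuousOn.log (by fun_prop) fun x hx ↦ by linarith [mem_Ioi.1 hx]
  exact (hlog.div_const _).const_mul _

section ReceivedPower

/-- The coherently combined RF power `S` at the destination: `p`, `q` are the fresh-message powers
`P12`, `P21` and `u`, `v` the common-message powers `Pu1`, `Pu2`. -/
noncomputable def receivedPower (h1 h2 p q u v : ℝ) : ℝ :=
  h1 ^ 2 * (p + u) + h2 ^ 2 * (q + v) + 2 * h1 * h2 * Real.sqrt (u * v)

variable {h1 h2 p q u v : ℝ}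

lemma receivedPower_swap : receivedPower h1 h2 p q u v = receivedPower h2 h1 q p v u := by
  unfold receivedPower
  rw [mul_comm v u]
  ring

lemma receivedPower_pos (hh1 : 0 < h1) (hh2 : 0 ≤ h2) (hp : 0 ≤ p) (hq : 0 ≤ q) (hu : 0 < u)
    (hv : 0 ≤ v) : 0 < receivedPower h1 h2 p q u v := by
  unfold receivedPower
  positivity

lemma strictMono_receivedPower_left (hh1 : 0 < h1) (hh2 : 0 ≤ h2) (hv : 0 ≤ v) :
    StrictMono fun u ↦ receivedPower h1 h2 p q u v := by
  intro u u' huu'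
  have hsqrt : Real.sqrt (u * v) ≤ Real.sqrt (u' * v) := by gcongr
  have hdirect : h1 ^ 2 * (p + u) < h1 ^ 2 * (p + u') := by gcongr
  exact add_lt_add_of_lt_of_le (by gcongr) (by gcongr)

lemma strictMono_receivedPower_right (hh1 : 0 ≤ h1) (hh2 : 0 < h2) (hu : 0 ≤ u) :
    StrictMono fun v ↦ receivedPower h1 h2 p q u v := by
  simpa only [receivedPower_swap (h1 := h1)] using strictMono_receivedPower_left hh2 hh1 hu

lemma tendsto_receivedPower {α : Type*} {l : Filter α} {P U V : α → ℝ}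
    (hP : Tendsto P l (𝓝 p)) (hU : Tendsto U l (𝓝 u)) (hV : Tendsto V l (𝓝 v)) :
    Tendsto (fun x ↦ receivedPower h1 h2 (P x) q (U x) (V x)) l
      (𝓝 (receivedPower h1 h2 p q u v)) :=
  (((hP.add hU).const_mul _).add ((hV.const_add q).const_mul _)).add ((hU.mul hV).sqrt.const_mul _)

end ReceivedPower

section DecoderSNR

/-- The signal-to-noise ratio at the information decoder when the power splitter sends the fraction
`1 - ρ` of the received power `s` to it: antenna noise `N` is split along with the signal, while
the processing noise `Np` is added after the splitter. -/
noncomputable def decoderSNR (N Np ρ s : ℝ) : ℝ := (1 - ρ) * s / ((1 - ρ) * N + Np)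

variable {N Np ρ s : ℝ}

lemma decoderNoise_pos (hN : 0 ≤ N) (hNp : 0 < Np) (hρ : ρ ≤ 1) : 0 < (1 - ρ) * N + Np :=
  add_pos_of_nonneg_of_pos (mul_nonneg (sub_nonneg.2 hρ) hN) hNp

lemma decoderSNR_nonneg (hN : 0 ≤ N) (hNp : 0 < Np) (hρ : ρ ≤ 1) (hs : 0 ≤ s) :
    0 ≤ decoderSNR N Np ρ s :=
  div_nonneg (mul_nonneg (sub_nonneg.2 hρ) hs) (decoderNoise_pos hN hNp hρ).le

lemma decoderSNR_pos (hN : 0 ≤ N) (hNp : 0 < Np) (hρ : ρ < 1) (hs : 0 < s) :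
    0 < decoderSNR N Np ρ s :=
  div_pos (mul_pos (sub_pos.2 hρ) hs) (decoderNoise_pos hN hNp hρ.le)

lemma strictMono_decoderSNR (hN : 0 ≤ N) (hNp : 0 < Np) (hρ : ρ < 1) :
    StrictMono (decoderSNR N Np ρ) := fun _ _ hss' ↦
  div_lt_div_of_pos_right (mul_lt_mul_of_pos_left hss' (sub_pos.2 hρ))
    (decoderNoise_pos hN hNp hρ.le)

lemma strictAntiOn_decoderSNR_splitting (hN : 0 ≤ N) (hNp : 0 < Np) (hs : 0 < s) :
    StrictAntiOn (fun ρ ↦ decoderSNR N Np ρ s) (Iic 1) := by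
  intro ρ hρ ρ' hρ' hlt
  refine (div_lt_div_iff₀ (decoderNoise_pos hN hNp hρ') (decoderNoise_pos hN hNp hρ)).2 ?_
  have hcross : 0 < (ρ' - ρ) * (s * Np) := mul_pos (sub_pos.2 hlt) (mul_pos hs hNp)
  linarith

lemma continuousAt_decoderSNR_splitting (hN : 0 ≤ N) (hNp : 0 < Np) (hρ : ρ ≤ 1) :
    ContinuousAt (fun ρ ↦ decoderSNR N Np ρ s) ρ :=
  ContinuousAt.div (by fun_prop) (by fun_prop) (decoderNoise_pos hN hNp hρ).ne'

lemma continuous_decoderSNR : Continuous (decoderSNR N Np ρ) := by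
  unfold decoderSNR
  fun_prop

end DecoderSNR

section DestinationSlack

/-- Strict form of the destination's constraints (iii) and (iv), at sum rate `r`, power-splitting
factor `ρ` and received RF power `s`: the harvested energy exceeds the decoding cost, and the
decodable rate exceeds `r`. -/
def DestinationSlack (g φ ψ : ℝ → ℝ) (N Np ρ r s : ℝ) : Prop :=
  φ r < ψ (ρ * (s + N)) ∧ r < g (decoderSNR N Np ρ s)

variable {g φ ψ : ℝ → ℝ} {N Np ρ r s : ℝ}

lemma destinationSlack_of_power_lt {s' : ℝ} (hg : StrictMonoOn g (Ici 0))
    (hψ : StrictMonoOn ψ (Ici 0)) (hN : 0 ≤ N) (hNp : 0 < Np) (hρ : ρ ∈ Ioo 0 1) (hs : 0 ≤ s)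
    (hss' : s < s') (hcost : φ r ≤ ψ (ρ * (s + N))) (hrate : r ≤ g (decoderSNR N Np ρ s)) :
    DestinationSlack g φ ψ N Np ρ r s' := by
  obtain ⟨hρ0, hρ1⟩ := hρ
  have hs' : 0 ≤ s' := hs.trans hss'.le
  constructor
  · refine hcost.trans_lt (hψ ?_ ?_ (by gcongr)) <;> exact mem_Ici.2 (by positivity)
  · exact hrate.trans_lt (hg (decoderSNR_nonneg hN hNp hρ1.le hs)
      (decoderSNR_nonneg hN hNp hρ1.le hs') (strictMono_decoderSNR hN hNp hρ1 hss'))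

lemma exists_destinationSlack_of_cost_lt (hg : StrictMonoOn g (Ici 0))
    (hψ : ContinuousOn ψ (Ici 0)) (hN : 0 ≤ N) (hNp : 0 < Np) (hρ : ρ ∈ Ioo 0 1) (hs : 0 < s)
    (hcost : φ r < ψ (ρ * (s + N))) (hrate : r ≤ g (decoderSNR N Np ρ s)) :
    ∃ ρ' ∈ Ioo 0 1, DestinationSlack g φ ψ N Np ρ' r s := by
  obtain ⟨hρ0, hρ1⟩ := hρ
  have hharvest : ContinuousAt (fun ρ ↦ ψ (ρ * (s + N))) ρ :=
    (hψ.continuousAt (Ici_mem_nhds (by positivity))).comp (f := fun ρ ↦ ρ * (s + N)) (by fun_prop)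
  have hslack : ∀ᶠ ρ' in 𝓝[<] ρ, φ r < ψ (ρ' * (s + N)) :=
    (hharvest.eventually_const_lt hcost).filter_mono nhdsWithin_le_nhds
  obtain ⟨ρ', hcost', hρ'0, hlt⟩ := (hslack.and (Ioo_mem_nhdsLT hρ0)).exists
  have hρ'1 : ρ' < 1 := hlt.trans hρ1
  refine ⟨ρ', ⟨hρ'0, hρ'1⟩, hcost', hrate.trans_lt ?_⟩
  exact hg (decoderSNR_nonneg hN hNp hρ1.le hs.le) (decoderSNR_nonneg hN hNp hρ'1.le hs.le)
    (strictAntiOn_decoderSNR_splitting hN hNp hs hρ'1.le hρ1.le hlt)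

lemma exists_destinationSlack_of_rate_lt (hg : ContinuousOn g (Ici 0))
    (hψ : StrictMonoOn ψ (Ici 0)) (hN : 0 ≤ N) (hNp : 0 < Np) (hρ : ρ ∈ Ioo 0 1) (hs : 0 < s)
    (hcost : φ r ≤ ψ (ρ * (s + N))) (hrate : r < g (decoderSNR N Np ρ s)) :
    ∃ ρ' ∈ Ioo 0 1, DestinationSlack g φ ψ N Np ρ' r s := by
  obtain ⟨hρ0, hρ1⟩ := hρ
  have hdecode : ContinuousAt (fun ρ ↦ g (decoderSNR N Np ρ s)) ρ :=
    (hg.continuousAt (Ici_mem_nhds (decoderSNR_pos hN hNp hρ1 hs))).comp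
      (f := fun ρ ↦ decoderSNR N Np ρ s) (continuousAt_decoderSNR_splitting hN hNp hρ1.le)
  have hslack : ∀ᶠ ρ' in 𝓝[>] ρ, r < g (decoderSNR N Np ρ' s) :=
    (hdecode.eventually_const_lt hrate).filter_mono nhdsWithin_le_nhds
  obtain ⟨ρ', hrate', hlt, hρ'1⟩ := (hslack.and (Ioo_mem_nhdsGT hρ1)).exists
  have hρ'0 : 0 < ρ' := hρ0.trans hlt
  refine ⟨ρ', ⟨hρ'0, hρ'1⟩, hcost.trans_lt (hψ ?_ ?_ (by gcongr)), hrate'⟩ <;>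
    exact mem_Ici.2 (by positivity)

lemma DestinationSlack.eventually {α : Type*} {l : Filter α} {R T : α → ℝ}
    (h : DestinationSlack g φ ψ N Np ρ r s) (hg : ContinuousOn g (Ici 0))
    (hφ : ContinuousWithinAt φ (Ici 0) r) (hψ : ContinuousOn ψ (Ici 0)) (hN : 0 ≤ N)
    (hNp : 0 < Np) (hρ : ρ ∈ Ioo 0 1) (hs : 0 < s) (hR : Tendsto R l (𝓝[Ici 0] r))
    (hT : Tendsto T l (𝓝 s)) : ∀ᶠ x in l, DestinationSlack g φ ψ N Np ρ (R x) (T x) := by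
  obtain ⟨hρ0, hρ1⟩ := hρ
  have hharvest : Tendsto (fun x ↦ ψ (ρ * (T x + N))) l (𝓝 (ψ (ρ * (s + N)))) :=
    (hψ.continuousAt (Ici_mem_nhds (by positivity))).tendsto.comp ((hT.add_const N).const_mul ρ)
  have hdecode : Tendsto (fun x ↦ g (decoderSNR N Np ρ (T x))) l (𝓝 (g (decoderSNR N Np ρ s))) :=
    (hg.continuousAt (Ici_mem_nhds (decoderSNR_pos hN hNp hρ1 hs))).tendsto.comp
      ((continuous_decoderSNR.tendsto s).comp hT)
  exact ((hφ.tendsto.comp hR).eventually_lt hharvest h.1).and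
    ((hR.mono_right nhdsWithin_le_nhds).eventually_lt hdecode h.2)

/-- Here `R` is the sum rate and `F` the decoding cost of user 2, both as functions of `P12`. -/
lemma DestinationSlack.exists_freshPower_gt {F R : ℝ → ℝ} {h1 h2 p q u v : ℝ}
    (h : DestinationSlack g φ ψ N Np ρ (R p) (receivedPower h1 h2 p q u v))
    (hg : ContinuousOn g (Ici 0)) (hφ : ContinuousOn φ (Ici 0)) (hψ : ContinuousOn ψ (Ici 0))
    (hF : ContinuousOn F (Ici 0)) (hR : ContinuousOn R (Ici 0)) (hR0 : MapsTo R (Ici 0) (Ici 0))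
    (hh1 : 0 < h1) (hh2 : 0 ≤ h2) (hN : 0 ≤ N) (hNp : 0 < Np) (hρ : ρ ∈ Ioo 0 1)
    (hp : 0 ≤ p) (hq : 0 ≤ q) (hu : 0 < u) (hv : 0 < v) :
    ∃ p' > p, ∃ u' > 0, ∃ v' > 0, p' + u' = p + u ∧ F p' + v' = F p + v ∧
      DestinationSlack g φ ψ N Np ρ (R p') (receivedPower h1 h2 p' q u' v') := by
  have hsub : Ioi p ⊆ Ici 0 := Ioi_subset_Ici hp
  have hid : Tendsto (fun x ↦ x) (𝓝[>] p) (𝓝 p) := nhdsWithin_le_nhds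
  have hU : Tendsto (fun x ↦ p + u - x) (𝓝[>] p) (𝓝 u) := by
    simpa only [add_sub_cancel_left] using hid.const_sub (p + u)
  have hV : Tendsto (fun x ↦ F p + v - F x) (𝓝[>] p) (𝓝 v) := by
    simpa only [add_sub_cancel_left] using ((hF p hp).mono hsub).tendsto.const_sub (F p + v)
  have hR' : Tendsto R (𝓝[>] p) (𝓝[Ici 0] (R p)) :=
    ((hR p hp).mono hsub).tendsto_nhdsWithin (hR0.mono_left hsub)
  have hslack := h.eventually hg (hφ _ (hR0 hp)) hψ hN hNp hρ
    (receivedPower_pos hh1 hh2 hp hq hu hv.le) hR' (tendsto_receivedPower hid hU hV)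
  obtain ⟨p', hp', hu', hv', hslack'⟩ := (eventually_mem_nhdsWithin.and
    ((hU.eventually_const_lt hu).and ((hV.eventually_const_lt hv).and hslack))).exists
  exact ⟨p', hp', _, hu', _, hv', add_sub_cancel _ _, add_sub_cancel _ _, hslack'⟩

/-- Here `U` and `V` are what the fresh powers and decoding costs leave of the two budgets. -/
lemma constraints_tight_of_forall_not_destinationSlack {h1 h2 p q u v U V : ℝ}
    (hgc : ContinuousOn g (Ici 0)) (hg : StrictMonoOn g (Ici 0)) (hψc : ContinuousOn ψ (Ici 0))
    (hψ : StrictMonoOn ψ (Ici 0)) (hh1 : 0 < h1) (hh2 : 0 < h2) (hN : 0 ≤ N) (hNp : 0 < Np)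
    (hρ : ρ ∈ Ioo 0 1) (hp : 0 ≤ p) (hq : 0 ≤ q) (hu : 0 < u) (hv : 0 < v)
    (huU : u ≤ U) (hvV : v ≤ V) (hcost : φ r ≤ ψ (ρ * (receivedPower h1 h2 p q u v + N)))
    (hrate : r ≤ g (decoderSNR N Np ρ (receivedPower h1 h2 p q u v)))
    (hno : ∀ ρ' ∈ Ioo 0 1, ∀ u' ∈ Ioc 0 U, ∀ v' ∈ Ioc 0 V,
      ¬ DestinationSlack g φ ψ N Np ρ' r (receivedPower h1 h2 p q u' v')) :
    u = U ∧ v = V ∧ φ r = ψ (ρ * (receivedPower h1 h2 p q u v + N)) ∧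
      r = g (decoderSNR N Np ρ (receivedPower h1 h2 p q u v)) := by
  have hs := receivedPower_pos hh1 hh2.le hp hq hu hv.le
  refine ⟨huU.eq_of_not_lt fun hlt ↦ ?_, hvV.eq_of_not_lt fun hlt ↦ ?_,
    hcost.eq_of_not_lt fun hlt ↦ ?_, hrate.eq_of_not_lt fun hlt ↦ ?_⟩
  · exact hno ρ hρ U ⟨hu.trans hlt, le_rfl⟩ v ⟨hv, hvV⟩
      (destinationSlack_of_power_lt hg hψ hN hNp hρ hs.le
        (strictMono_receivedPower_left hh1 hh2.le hv.le hlt) hcost hrate)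
  · exact hno ρ hρ u ⟨hu, huU⟩ V ⟨hv.trans hlt, le_rfl⟩
      (destinationSlack_of_power_lt hg hψ hN hNp hρ hs.le
        (strictMono_receivedPower_right hh1.le hh2 hu.le hlt) hcost hrate)
  · obtain ⟨ρ', hρ', hslack⟩ :=
      exists_destinationSlack_of_cost_lt hg hψc hN hNp hρ hs hlt hrate
    exact hno ρ' hρ' u ⟨hu, huU⟩ v ⟨hv, hvV⟩ hslack
  · obtain ⟨ρ', hρ', hslack⟩ :=
      exists_destinationSlack_of_rate_lt hgc hψ hN hNp hρ hs hcost hlt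
    exact hno ρ' hρ' u ⟨hu, huU⟩ v ⟨hv, hvV⟩ hslack

end DestinationSlack

theorem stmt_16_general {h1 h2 b c PU1 PU2 Np N : ℝ}
    (hh1 : 0 < h1) (hh2 : 0 < h2) (hb : 0 < b) (hc : 0 ≤ c) (hNp : 0 < Np) (hN : 0 ≤ N)
    {g φ φ1 φ2 ψ : ℝ → ℝ}
    (hgc : ContinuousOn g (Ici 0)) (hg : StrictMonoOn g (Ici 0)) (hg0 : 0 ≤ g 0)
    (hφc : ContinuousOn φ (Ici 0)) (hφ2c : ContinuousOn φ2 (Ici 0))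
    (hψc : ContinuousOn ψ (Ici 0)) (hψ : StrictMonoOn ψ (Ici 0))
    {S : ℝ → ℝ → ℝ → ℝ → ℝ}
    (hS : ∀ P12 P21 Pu1 Pu2 : ℝ, S P12 P21 Pu1 Pu2
      = h1 ^ 2 * (P12 + Pu1) + h2 ^ 2 * (P21 + Pu2) + 2 * h1 * h2 * Real.sqrt (Pu1 * Pu2))
    {Feas : ℝ → ℝ → ℝ → ℝ → ℝ → Prop}
    (hFeas : ∀ ρ P12 P21 Pu1 Pu2 : ℝ, Feas ρ P12 P21 Pu1 Pu2 ↔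
      ρ ∈ Icc (0 : ℝ) 1 ∧ 0 ≤ P12 ∧ 0 ≤ P21 ∧ 0 ≤ Pu1 ∧ 0 ≤ Pu2 ∧
      φ1 (g (c * P21)) + P12 + Pu1 ≤ PU1 ∧
      φ2 (g (b * P12)) + P21 + Pu2 ≤ PU2 ∧
      φ (g (b * P12) + g (c * P21)) ≤ ψ (ρ * (S P12 P21 Pu1 Pu2 + N)) ∧
      g (b * P12) + g (c * P21)
        ≤ g ((1 - ρ) * S P12 P21 Pu1 Pu2 / ((1 - ρ) * N + Np)))
    {μ1 μ2 : ℝ} (hμ1 : 0 < μ1) {ρ p q u v : ℝ} (hfeas : Feas ρ p q u v)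
    (hρ : ρ ∈ Ioo 0 1) (hu : 0 < u) (hv : 0 < v)
    (hmax : ∀ ρ' p' q' u' v' : ℝ, Feas ρ' p' q' u' v' →
      μ1 * g (b * p') + μ2 * g (c * q') ≤ μ1 * g (b * p) + μ2 * g (c * q)) :
    φ1 (g (c * q)) + p + u = PU1 ∧
    φ2 (g (b * p)) + q + v = PU2 ∧
    φ (g (b * p) + g (c * q)) = ψ (ρ * (S p q u v + N)) ∧
    g (b * p) + g (c * q) = g ((1 - ρ) * S p q u v / ((1 - ρ) * N + Np)) := by
  obtain rfl : S = receivedPower h1 h2 := by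
    funext P12 P21 Pu1 Pu2
    exact hS P12 P21 Pu1 Pu2
  obtain ⟨-, hp, hq, -, -, hbudget1, hbudget2, hcost, hrate⟩ := (hFeas _ _ _ _ _).1 hfeas
  have hb_maps : MapsTo (b * ·) (Ici 0) (Ici 0) := fun _ hx ↦ mul_nonneg hb.le hx
  have hg_maps : MapsTo g (Ici 0) (Ici 0) := fun _ hx ↦
    hg0.trans (hg.monotoneOn self_mem_Ici hx hx)
  have hrate1 : ContinuousOn (fun x ↦ g (b * x)) (Ici 0) := hgc.comp (by fun_prop) hb_maps
  have hsum_maps : MapsTo (fun x ↦ g (b * x) + g (c * q)) (Ici 0) (Ici 0) := fun _ hx ↦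
    mem_Ici.2 (add_nonneg (hg_maps (hb_maps hx)) (hg_maps (mul_nonneg hc hq)))
  have no_slack : ∀ ρ' ∈ Ioo 0 1, ∀ u' ∈ Ioc 0 (PU1 - φ1 (g (c * q)) - p),
      ∀ v' ∈ Ioc 0 (PU2 - φ2 (g (b * p)) - q),
      ¬ DestinationSlack g φ ψ N Np ρ' (g (b * p) + g (c * q))
        (receivedPower h1 h2 p q u' v') := by
    rintro ρ' hρ' u' ⟨hu', hu'le⟩ v' ⟨hv', hv'le⟩ hslack
    obtain ⟨p'', hlt, u'', hu'', v'', hv'', hsum1, hsum2, hcost'', hrate''⟩ :=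
      hslack.exists_freshPower_gt (R := fun x ↦ g (b * x) + g (c * q))
        (F := fun x ↦ φ2 (g (b * x))) hgc hφc hψc (hφ2c.comp hrate1 (hg_maps.comp hb_maps))
        (hrate1.add_const _) hsum_maps hh1 hh2.le hN hNp hρ' hp hq hu' hv'
    have hp'' : 0 ≤ p'' := hp.trans hlt.le
    have hgain : g (b * p) < g (b * p'') := hg (hb_maps hp) (hb_maps hp'')
      (mul_lt_mul_of_pos_left hlt hb)
    refine (hmax ρ' p'' q u'' v'' ((hFeas _ _ _ _ _).2 ⟨Ioo_subset_Icc_self hρ', hp'', hq,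
      hu''.le, hv''.le, by linarith, by linarith, hcost''.le, hrate''.le⟩)).not_gt ?_
    gcongr
  obtain ⟨huU, hvV, hcost_eq, hrate_eq⟩ := constraints_tight_of_forall_not_destinationSlack
    hgc hg hψc hψ hh1 hh2 hN hNp hρ hp hq hu hv (by linarith) (by linarith) hcost hrate no_slack
  exact ⟨by linarith, by linarith, hcost_eq, hrate_eq⟩

/-- PS-SWIPT MAC with user cooperation (Lemma 5): at a maximizer of the
weighted sum rate `μ1·g(bP12) + μ2·g(cP21)` with interior PS factor
`0 < ρ* < 1` and strictly positive common-message powers, all four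
constraints — the two users' power budgets, the destination's decoding-cost
constraint, and the sum-rate constraint — hold with equality. -/
theorem stmt_16 (h1 h2 b c PU1 PU2 Np N : ℝ)
    (hh1 : 0 < h1) (hh2 : 0 < h2) (hb : 0 < b) (hc : 0 < c)
    (hPU1 : 0 < PU1) (hPU2 : 0 < PU2) (hNp : 0 < Np) (hN : 0 ≤ N)
    (g : ℝ → ℝ) (hg : ∀ x : ℝ, g x = (1/2) * Real.logb 2 (1 + x))
    (φ φ1 φ2 ψ : ℝ → ℝ)
    (hφc : ContinuousOn φ (Set.Ici 0)) (hφ1c : ContinuousOn φ1 (Set.Ici 0))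
    (hφ2c : ContinuousOn φ2 (Set.Ici 0)) (hψc : ContinuousOn ψ (Set.Ici 0))
    (hφ : StrictMonoOn φ (Set.Ici 0)) (hφ1 : StrictMonoOn φ1 (Set.Ici 0))
    (hφ2 : StrictMonoOn φ2 (Set.Ici 0)) (hψ : StrictMonoOn ψ (Set.Ici 0))
    (hφmap : ∀ x : ℝ, 0 ≤ x → 0 ≤ φ x) (hφ1map : ∀ x : ℝ, 0 ≤ x → 0 ≤ φ1 x)
    (hφ2map : ∀ x : ℝ, 0 ≤ x → 0 ≤ φ2 x) (hψmap : ∀ x : ℝ, 0 ≤ x → 0 ≤ ψ x)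
    (S : ℝ → ℝ → ℝ → ℝ → ℝ)
    (hS : ∀ P12 P21 Pu1 Pu2 : ℝ, S P12 P21 Pu1 Pu2
      = h1 ^ 2 * (P12 + Pu1) + h2 ^ 2 * (P21 + Pu2) + 2 * h1 * h2 * Real.sqrt (Pu1 * Pu2))
    (Feas : ℝ → ℝ → ℝ → ℝ → ℝ → Prop)
    (hFeas : ∀ ρ P12 P21 Pu1 Pu2 : ℝ, Feas ρ P12 P21 Pu1 Pu2 ↔
      ρ ∈ Set.Icc (0 : ℝ) 1 ∧ 0 ≤ P12 ∧ 0 ≤ P21 ∧ 0 ≤ Pu1 ∧ 0 ≤ Pu2 ∧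
      φ1 (g (c * P21)) + P12 + Pu1 ≤ PU1 ∧
      φ2 (g (b * P12)) + P21 + Pu2 ≤ PU2 ∧
      φ (g (b * P12) + g (c * P21)) ≤ ψ (ρ * (S P12 P21 Pu1 Pu2 + N)) ∧
      g (b * P12) + g (c * P21)
        ≤ g ((1 - ρ) * S P12 P21 Pu1 Pu2 / ((1 - ρ) * N + Np)))
    (μ1 μ2 : ℝ) (hμ1 : 0 < μ1) (hμ2 : 0 < μ2)
    (ρs P12s P21s Pu1s Pu2s : ℝ)
    (hfeas : Feas ρs P12s P21s Pu1s Pu2s)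
    (hρs0 : 0 < ρs) (hρs1 : ρs < 1) (hPu1s : 0 < Pu1s) (hPu2s : 0 < Pu2s)
    (hmax : ∀ ρ P12 P21 Pu1 Pu2 : ℝ, Feas ρ P12 P21 Pu1 Pu2 →
      μ1 * g (b * P12) + μ2 * g (c * P21) ≤ μ1 * g (b * P12s) + μ2 * g (c * P21s)) :
    φ1 (g (c * P21s)) + P12s + Pu1s = PU1 ∧
    φ2 (g (b * P12s)) + P21s + Pu2s = PU2 ∧
    φ (g (b * P12s) + g (c * P21s)) = ψ (ρs * (S P12s P21s Pu1s Pu2s + N)) ∧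
    g (b * P12s) + g (c * P21s)
      = g ((1 - ρs) * S P12s P21s Pu1s Pu2s / ((1 - ρs) * N + Np)) := by
  obtain rfl : g = gaussianRate := funext hg
  have hsub : Ici (0 : ℝ) ⊆ Ioi (-1) := Ici_subset_Ioi.2 (by norm_num)
  exact stmt_16_general hh1 hh2 hb hc.le hNp hN (continuousOn_gaussianRate.mono hsub)
    (strictMonoOn_gaussianRate.mono hsub) gaussianRate_zero.ge hφc hφ2c hψc hψ hS hFeas hμ1 hfeas
    ⟨hρs0, hρs1⟩ hPu1s hPu2s hmax
end
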